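/- arXiv:1911.00785 — 8 statements merged into one kernel-verified Lean document; each statement's English description precedes it below -/
import Mathlib

section
/- If an action of a countably infinite group G on a compact metrizable space X by homeomorphisms has the pseudo-orbit tracing property, then it has the uniform strong topological Markov property. -/
open Pointwise

/-- Supremum over `g ∈ K` of `ρ (g • x) (g • y)`. -/
noncomputable def supOf {G X : Type*} [SMul G X] (ρ : X → X → ℝ) (K : Set G) (x y : X) : ℝ :=
  ⨆ g : K, ρ ((g : G) • x) ((g : G) • y)

/-- `d_K(x,y) = sup_{g ∈ K} d(g x, g y)`. -/
noncomputable def supD {G X : Type*} [SMul G X] [PseudoMetricSpace X] (K : Set G) (x y : X) : ℝ :=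
  supOf dist K x y

/-- `B` is an `(ε,δ)`-memory set for `A`. -/
def IsMemorySet (G X : Type*) [SMul G X] [PseudoMetricSpace X] (ε δ : ℝ)
    (A B : Finset G) : Prop :=
  (A : Set G) ⊆ (B : Set G) ∧
    ∀ x y : X, supD ((B : Set G) \ (A : Set G)) x y ≤ δ →
      ∃ z : X, supD (B : Set G) x z ≤ ε ∧ supD (Set.univ \ (A : Set G)) y z ≤ ε

/-- The topological Markov property. -/
def TMP (G X : Type*) [SMul G X] [PseudoMetricSpace X] : Prop :=
  ∀ ε > (0 : ℝ), ∃ δ > (0 : ℝ), ∀ A : Finset G, ∃ B : Finset G, IsMemorySet G X ε δ A B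

/-- The strong topological Markov property. -/
def StrongTMP (G X : Type*) [Group G] [DecidableEq G] [MulAction G X]
    [PseudoMetricSpace X] : Prop :=
  ∀ ε > (0 : ℝ), ∃ δ > (0 : ℝ), ∃ F : Finset G, (1 : G) ∈ F ∧
    ∀ A : Finset G, IsMemorySet G X ε δ A (F * A)

/-- `V` is `B`-separated. -/
def Separated {G : Type*} [Mul G] (B V : Set G) : Prop :=
  ∀ v₁ ∈ V, ∀ v₂ ∈ V, v₁ ≠ v₂ → Disjoint (B * ({v₁} : Set G)) (B * ({v₂} : Set G))

/-- `B` is a uniform `(ε,δ)`-memory set for `A`. -/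
def IsUniformMemorySet (G X : Type*) [Group G] [MulAction G X] [PseudoMetricSpace X]
    (ε δ : ℝ) (A B : Finset G) : Prop :=
  IsMemorySet G X ε δ A B ∧
    ∀ V : Finset G, Separated (B : Set G) (V : Set G) →
      ∀ (xv : G → X) (y : X),
        (∀ v ∈ V, supD (((B : Set G) \ (A : Set G)) * ({v} : Set G)) (xv v) y ≤ δ) →
        ∃ z : X, (∀ v ∈ V, supD ((B : Set G) * ({v} : Set G)) z (xv v) ≤ ε) ∧
          supD (Set.univ \ ((A : Set G) * (V : Set G))) z y ≤ ε

/-- The uniform topological Markov property. -/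
def UniformTMP (G X : Type*) [Group G] [MulAction G X] [PseudoMetricSpace X] : Prop :=
  ∀ ε > (0 : ℝ), ∃ δ > (0 : ℝ), ∀ A : Finset G, ∃ B : Finset G,
    IsUniformMemorySet G X ε δ A B

/-- The uniform strong topological Markov property. -/
def UniformStrongTMP (G X : Type*) [Group G] [DecidableEq G] [MulAction G X]
    [PseudoMetricSpace X] : Prop :=
  ∀ ε > (0 : ℝ), ∃ δ > (0 : ℝ), ∃ F : Finset G, (1 : G) ∈ F ∧
    ∀ A : Finset G, IsUniformMemorySet G X ε δ A (F * A)

/-- Expansivity of the action. -/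
def Expansive (G X : Type*) [SMul G X] [PseudoMetricSpace X] : Prop :=
  ∃ c > (0 : ℝ), ∀ x y : X, x ≠ y → ∃ g : G, dist (g • x) (g • y) > c

/-- `(x,y)` is an asymptotic pair. -/
def Asymptotic (G : Type*) {X : Type*} [SMul G X] [PseudoMetricSpace X] (x y : X) : Prop :=
  ∀ ε > (0 : ℝ), ∃ F : Finset G, ∀ g ∉ F, dist (g • x) (g • y) ≤ ε

/-- `(S,δ)` pseudo-orbit. -/
def IsPseudoOrbit {G X : Type*} [Mul G] [SMul G X] [PseudoMetricSpace X]
    (S : Finset G) (δ : ℝ) (w : G → X) : Prop :=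
  ∀ s ∈ S, ∀ g : G, dist (s • w g) (w (s * g)) < δ

/-- `w` is `ε`-traced by `x`. -/
def Traces {G X : Type*} [SMul G X] [PseudoMetricSpace X] (ε : ℝ) (x : X) (w : G → X) : Prop :=
  ∀ g : G, dist (g • x) (w g) ≤ ε

/-- Pseudo-orbit tracing property. -/
def POTP (G X : Type*) [Mul G] [SMul G X] [PseudoMetricSpace X] : Prop :=
  ∀ ε > (0 : ℝ), ∃ δ > (0 : ℝ), ∃ S : Finset G, ∀ w : G → X,
    IsPseudoOrbit S δ w → ∃ x : X, Traces ε x w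

/-- `J` is an independence set for the tuple `U`. -/
def IndepSet {G X : Type*} [SMul G X] {n : ℕ} (U : Fin n → Set X) (J : Set G) : Prop :=
  ∀ I : Finset G, (I : Set G) ⊆ J → I.Nonempty → ∀ φ : G → Fin n,
    (⋂ s ∈ I, (fun x : X => s • x) ⁻¹' U (φ s)).Nonempty

/-- The tuple `U` has positive independence density. -/
def PosIndepDensity (G : Type*) {X : Type*} [SMul G X] {n : ℕ} (U : Fin n → Set X) : Prop :=
  ∃ q > (0 : ℝ), ∀ F : Finset G, ∃ J : Finset G, J ⊆ F ∧
    q * (F.card : ℝ) ≤ (J.card : ℝ) ∧ IndepSet U (J : Set G)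

/-- Orbit IE-tuple. -/
def IETuple (G : Type*) {X : Type*} [SMul G X] [TopologicalSpace X] {n : ℕ}
    (x : Fin n → X) : Prop :=
  ∀ U : Fin n → Set X, (∀ i, IsOpen (U i)) → (∀ i, x i ∈ U i) → PosIndepDensity G U

/-- Minimality of the action. -/
def MinimalAction (G X : Type*) [SMul G X] [TopologicalSpace X] : Prop :=
  ∀ Y : Set X, IsClosed Y → (∀ g : G, ∀ y ∈ Y, g • y ∈ Y) → Y.Nonempty → Y = Set.univ

/-- Følner sequence. -/
def FolnerSeq (G : Type*) [Group G] [DecidableEq G] (F : ℕ → Finset G) : Prop :=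
  (∀ n, (F n).Nonempty) ∧
    ∀ K : Finset G, Filter.Tendsto
      (fun n => ((symmDiff (K * F n) (F n)).card : ℝ) / ((F n).card : ℝ))
      Filter.atTop (nhds 0)

/-- A bound on `supD` gives pointwise bounds. -/
theorem le_of_supD_le {G X : Type*} [SMul G X] [MetricSpace X] [CompactSpace X]
    {K : Set G} {x y : X} {δ : ℝ} (h : supD K x y ≤ δ) {g : G} (hg : g ∈ K) :
    dist (g • x) (g • y) ≤ δ := by
  refine le_trans ?_ h
  have hb : BddAbove (Set.range fun g : K => dist ((g : G) • x) ((g : G) • y)) := by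
    refine ⟨Metric.diam (Set.univ : Set X), ?_⟩
    rintro _ ⟨g, rfl⟩
    exact Metric.dist_le_diam_of_mem isCompact_univ.isBounded (Set.mem_univ _) (Set.mem_univ _)
  exact le_ciSup hb ⟨g, hg⟩

/-- Pointwise bounds give a bound on `supD`. -/
theorem supD_le_of_forall {G X : Type*} [SMul G X] [MetricSpace X]
    {K : Set G} {x y : X} {ε : ℝ} (hε : 0 ≤ ε)
    (h : ∀ g ∈ K, dist (g • x) (g • y) ≤ ε) : supD K x y ≤ ε :=
  Real.iSup_le (fun g => h g g.2) hε

/-- Membership in a right translate by one element. -/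
theorem mem_mul_singleton_iff {G : Type*} [Group G] (B : Set G) (v g : G) :
    g ∈ B * ({v} : Set G) ↔ g * v⁻¹ ∈ B := by
  simp [Set.mem_mul, mul_inv_eq_iff_eq_mul, eq_mul_inv_iff_mul_eq]

/-- The core construction: glue the orbits into a pseudo-orbit and trace it. -/
theorem gluing_core {G X : Type*} [Group G] [DecidableEq G]
    [MetricSpace X] [CompactSpace X] [MulAction G X] {ε δ : ℝ} (hε : 0 < ε) (hδ : 0 < δ)
    (S : Finset G)
    (hS : ∀ w : G → X, IsPseudoOrbit S δ w → ∃ x : X, Traces (ε / 2) x w)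
    (A B T : Finset G) (hAT : A ⊆ T) (hTB : T ⊆ B)
    (hST : ∀ s ∈ S, ∀ t ∈ T, s * t ∈ B)
    (hSA : ∀ s ∈ S, ∀ g : G, s * g ∈ A → g ∈ T)
    (V : Finset G) (hsep : Separated (B : Set G) (V : Set G)) (xv : G → X) (y : X)
    (hxy : ∀ v ∈ V, supD (((B : Set G) \ (A : Set G)) * ({v} : Set G)) (xv v) y
      ≤ min (δ / 2) (ε / 2)) :
    ∃ z : X, (∀ v ∈ V, supD ((B : Set G) * ({v} : Set G)) z (xv v) ≤ ε) ∧
      supD (Set.univ \ ((A : Set G) * (V : Set G))) z y ≤ ε := by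
  classical
  have huniq : ∀ g : G, ∀ v ∈ V, ∀ v' ∈ V, g * v⁻¹ ∈ B → g * v'⁻¹ ∈ B → v = v' := by
    intro g v hv v' hv' h h'
    by_contra hne
    exact Set.disjoint_left.1 (hsep v hv v' hv' hne)
      ((mem_mul_singleton_iff _ _ _).2 h) ((mem_mul_singleton_iff _ _ _).2 h')
  have hclose : ∀ v ∈ V, ∀ g : G, g * v⁻¹ ∈ B → g * v⁻¹ ∉ A →
      dist (g • xv v) (g • y) ≤ min (δ / 2) (ε / 2) := by
    intro v hv g hB hA
    exact le_of_supD_le (hxy v hv) ((mem_mul_singleton_iff _ _ _).2 ⟨hB, hA⟩)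
  obtain ⟨w, hw1, hw2⟩ : ∃ w : G → X,
      (∀ g : G, ∀ v ∈ V, g * v⁻¹ ∈ T → w g = g • xv v) ∧
      (∀ g : G, (∀ v ∈ V, g * v⁻¹ ∉ T) → w g = g • y) := by
    refine ⟨fun g => if h : ∃ v ∈ V, g * v⁻¹ ∈ T then g • xv h.choose else g • y, ?_, ?_⟩
    · intro g v hv hg
      have h : ∃ v ∈ V, g * v⁻¹ ∈ T := ⟨v, hv, hg⟩
      have e : h.choose = v :=
        huniq g _ h.choose_spec.1 v hv (hTB h.choose_spec.2) (hTB hg)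
      simp only [dif_pos h, e]
    · intro g hg
      have h : ¬ ∃ v ∈ V, g * v⁻¹ ∈ T := by
        rintro ⟨v, hv, h⟩
        exact hg v hv h
      simp only [dif_neg h]
  have hmin1 : min (δ / 2) (ε / 2) ≤ δ / 2 := min_le_left _ _
  have hmin2 : min (δ / 2) (ε / 2) ≤ ε / 2 := min_le_right _ _
  have hpo : IsPseudoOrbit S δ w := by
    intro s hs g
    by_cases h1 : ∃ v ∈ V, g * v⁻¹ ∈ T
    · obtain ⟨v, hv, hgv⟩ := h1
      have hB : s * g * v⁻¹ ∈ B := by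
        rw [mul_assoc]
        exact hST s hs _ hgv
      rw [hw1 g v hv hgv, ← mul_smul]
      by_cases h2 : s * g * v⁻¹ ∈ T
      · rw [hw1 _ v hv h2, dist_self]
        exact hδ
      · have h3 : ∀ v' ∈ V, s * g * v'⁻¹ ∉ T := by
          intro v' hv' h
          have e := huniq _ v hv v' hv' hB (hTB h)
          exact h2 (e ▸ h)
        rw [hw2 _ h3]
        have := hclose v hv _ hB (fun h => h2 (hAT h))
        linarith
    · push Not at h1
      rw [hw2 g h1, ← mul_smul]
      by_cases h2 : ∃ v ∈ V, s * g * v⁻¹ ∈ T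
      · obtain ⟨v, hv, hgv⟩ := h2
        rw [hw1 _ v hv hgv, dist_comm]
        have := hclose v hv _ (hTB hgv)
          (fun h => h1 v hv (hSA s hs _ (by rw [← mul_assoc]; exact h)))
        linarith
      · push Not at h2
        rw [hw2 _ h2, dist_self]
        exact hδ
  obtain ⟨z, hz⟩ := hS w hpo
  refine ⟨z, ?_, ?_⟩
  · intro v hv
    refine supD_le_of_forall hε.le fun g hg => ?_
    have hB : g * v⁻¹ ∈ B := (mem_mul_singleton_iff _ _ _).1 hg
    have hzg := hz g
    by_cases h2 : g * v⁻¹ ∈ T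
    · rw [hw1 g v hv h2] at hzg
      linarith
    · have h3 : ∀ v' ∈ V, g * v'⁻¹ ∉ T := by
        intro v' hv' h
        have e := huniq _ v hv v' hv' hB (hTB h)
        exact h2 (e ▸ h)
      rw [hw2 g h3] at hzg
      have h4 := hclose v hv g hB (fun h => h2 (hAT h))
      have h5 := dist_triangle_right (g • z) (g • xv v) (g • y)
      linarith
  · refine supD_le_of_forall hε.le fun g hg => ?_
    have hzg := hz g
    by_cases h1 : ∃ v ∈ V, g * v⁻¹ ∈ T
    · obtain ⟨v, hv, hgv⟩ := h1
      rw [hw1 g v hv hgv] at hzg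
      have hA : g * v⁻¹ ∉ A := fun h =>
        hg.2 (Set.mem_mul.2 ⟨g * v⁻¹, h, v, hv, by simp⟩)
      have h4 := hclose v hv g (hTB hgv) hA
      have h5 := dist_triangle (g • z) (g • xv v) (g • y)
      linarith
    · push Not at h1
      rw [hw2 g h1] at hzg
      linarith

/-- If an action of a countably infinite group `G` on a compact metrizable
space `X` by homeomorphisms has the pseudo-orbit tracing property, then it has the uniform
strong topological Markov property. -/
theorem stmt2 (G X : Type*) [Group G] [Countable G] [Infinite G] [DecidableEq G]
    [MetricSpace X] [CompactSpace X] [MulAction G X]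
    (hcont : ∀ g : G, Continuous fun x : X => g • x)
    (hpotp : POTP G X) :
    UniformStrongTMP G X := by
  intro ε hε
  obtain ⟨δ, hδ, S, hS⟩ := hpotp (ε / 2) (by linarith)
  refine ⟨min (δ / 2) (ε / 2), by positivity, insert 1 S * insert 1 S⁻¹, ?_, ?_⟩
  · exact Finset.mem_mul.2 ⟨1, by simp, 1, by simp, by simp⟩
  intro A
  have hAT : A ⊆ insert 1 S⁻¹ * A := fun a ha =>
    Finset.mem_mul.2 ⟨1, by simp, a, ha, by simp⟩
  have hTB : insert 1 S⁻¹ * A ⊆ insert 1 S * insert 1 S⁻¹ * A := fun a ha => by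
    rw [mul_assoc]
    exact Finset.mem_mul.2 ⟨1, by simp, a, ha, by simp⟩
  have hST : ∀ s ∈ S, ∀ t ∈ insert 1 S⁻¹ * A, s * t ∈ insert 1 S * insert 1 S⁻¹ * A := by
    intro s hs t ht
    rw [mul_assoc]
    exact Finset.mul_mem_mul (Finset.mem_insert_of_mem hs) ht
  have hSA : ∀ s ∈ S, ∀ g : G, s * g ∈ A → g ∈ insert 1 S⁻¹ * A := by
    intro s hs g hg
    exact Finset.mem_mul.2 ⟨s⁻¹, Finset.mem_insert_of_mem (Finset.inv_mem_inv hs),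
      s * g, hg, by simp⟩
  have key := gluing_core hε hδ S hS A _ _ hAT hTB hST hSA
  refine ⟨⟨Finset.coe_subset.2 (hAT.trans hTB), ?_⟩, key⟩
  intro x y hxy
  obtain ⟨z, hz1, hz2⟩ := key {1} (by
      intro v₁ h₁ v₂ h₂ hne
      simp only [Finset.coe_singleton, Set.mem_singleton_iff] at h₁ h₂
      exact absurd (h₁.trans h₂.symm) hne) (fun _ => x) y (by
      intro v hv
      obtain rfl := Finset.mem_singleton.1 hv
      rw [Set.singleton_one, mul_one]
      exact hxy)
  have hcomm : ∀ (K : Set G) (a b : X), supD K a b = supD K b a := by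
    intro K a b
    simp only [supD, supOf, dist_comm]
  refine ⟨z, ?_, ?_⟩
  · have h := hz1 1 (by simp)
    rw [Set.singleton_one, mul_one] at h
    rw [hcomm]
    exact h
  · rw [Finset.coe_singleton, Set.singleton_one, mul_one] at hz2
    rw [hcomm]
    exact hz2
end

section
/- Every expansive action of a countably infinite group G on a compact metrizable space X with the topological Markov property has the uniform topological Markov property. -/
open Pointwise

theorem supD_le_iff_aux {G X : Type*} [SMul G X] [MetricSpace X] [CompactSpace X]
    (K : Set G) (x y : X) (r : ℝ) (hr : 0 ≤ r) :
    supD K x y ≤ r ↔ ∀ g ∈ K, dist (g • x) (g • y) ≤ r := by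
  unfold supD supOf
  constructor
  · intro h g hg
    have hb : BddAbove (Set.range fun g : K => dist ((g : G) • x) ((g : G) • y)) := by
      refine ⟨Metric.diam (Set.univ : Set X), ?_⟩
      rintro _ ⟨k, rfl⟩
      exact Metric.dist_le_diam_of_mem isCompact_univ.isBounded (Set.mem_univ _) (Set.mem_univ _)
    exact (le_ciSup hb ⟨g, hg⟩).trans h
  · intro h
    exact Real.iSup_le (fun k => h k k.2) hr

theorem expansive_unif_aux {G X : Type*} [Group G] [MetricSpace X] [CompactSpace X]
    [MulAction G X] (hcont : ∀ g : G, Continuous fun x : X => g • x) (c : ℝ)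
    (hc : ∀ x y : X, x ≠ y → ∃ g : G, dist (g • x) (g • y) > c) (η : ℝ) (hη : 0 < η) :
    ∃ F : Finset G, ∀ x y : X, (∀ f ∈ F, dist (f • x) (f • y) ≤ c) → dist x y ≤ η := by
  have hcl : ∀ g : G, IsClosed {p : X × X | dist (g • p.1) (g • p.2) ≤ c} := fun g =>
    isClosed_le (((hcont g).comp continuous_fst).dist ((hcont g).comp continuous_snd))
      continuous_const
  have hK : IsCompact {p : X × X | η ≤ dist p.1 p.2} :=
    (isClosed_le continuous_const (continuous_fst.dist continuous_snd)).isCompact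
  obtain ⟨F, hF⟩ := hK.elim_finite_subfamily_closed _ hcl (by
    ext p
    simp only [Set.mem_inter_iff, Set.mem_ofPred_eq, Set.mem_iInter, Set.mem_empty_iff_false,
      iff_false, not_and, not_forall, not_le]
    intro hp
    exact hc p.1 p.2 (dist_pos.1 (hη.trans_le hp)))
  refine ⟨F, fun x y h => ?_⟩
  by_contra hlt
  have : (x, y) ∈ ({p : X × X | η ≤ dist p.1 p.2} ∩
      ⋂ i ∈ F, {p : X × X | dist (i • p.1) (i • p.2) ≤ c}) := by
    simp only [Set.mem_inter_iff, Set.mem_ofPred_eq, Set.mem_iInter]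
    exact ⟨(not_le.1 hlt).le, h⟩
  rw [hF] at this
  exact this

/-- The induction invariant: `z` follows `xv v` on `B v` and `y` off `A V`, up to `r`. -/
def Follows {G X : Type*} [Group G] [MetricSpace X] [MulAction G X]
    (A B V : Finset G) (xv : G → X) (y : X) (r : ℝ) (z : X) : Prop :=
  (∀ v ∈ V, ∀ g : G, g * v⁻¹ ∈ B → dist (g • z) (g • xv v) ≤ r) ∧
    ∀ g : G, (∀ v ∈ V, g * v⁻¹ ∉ A) → dist (g • z) (g • y) ≤ r

theorem follows_upgrade {G X : Type*} [Group G] [MetricSpace X] [MulAction G X]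
    (A B F V : Finset G) (xv : G → X) (y z : X) (c η δ ε : ℝ) (hδ : 0 ≤ δ) (hη : 0 ≤ η)
    (hsum : η + δ ≤ ε) (h1 : (1 : G) ∈ F)
    (hF : ∀ x y : X, (∀ f ∈ F, dist (f • x) (f • y) ≤ c) → dist x y ≤ η)
    (hB1 : ∀ f ∈ F, ∀ g, f * g ∈ A → g ∈ B)
    (hB2 : ∀ f ∈ F, ∀ f' ∈ F, ∀ g, f * g ∈ A → f' * g ∈ B)
    (hsep : ∀ v ∈ V, ∀ w ∈ V, ∀ g : G, g * v⁻¹ ∈ B → g * w⁻¹ ∈ B → v = w)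
    (hxy : ∀ v ∈ V, ∀ g : G, g * v⁻¹ ∈ B → g * v⁻¹ ∉ A → dist (g • xv v) (g • y) ≤ δ)
    (h : Follows A B V xv y c z) : Follows A B V xv y ε z := by
  have key1 : ∀ g : G, ∀ v ∈ V, ∀ f ∈ F, f * (g * v⁻¹) ∈ A → dist (g • z) (g • xv v) ≤ η := by
    intro g v hv f hf hA
    apply hF
    intro f' hf'
    rw [smul_smul, smul_smul]
    apply h.1 v hv
    rw [mul_assoc]
    exact hB2 f hf f' hf' _ hA
  have key2 : ∀ g : G, (¬ ∃ v ∈ V, ∃ f ∈ F, f * (g * v⁻¹) ∈ A) →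
      dist (g • z) (g • y) ≤ η := by
    intro g hn
    apply hF
    intro f hf
    rw [smul_smul, smul_smul]
    apply h.2
    intro v hv hA
    exact hn ⟨v, hv, f, hf, by rwa [← mul_assoc]⟩
  constructor
  · intro v hv g hg
    by_cases hh : ∃ v ∈ V, ∃ f ∈ F, f * (g * v⁻¹) ∈ A
    · obtain ⟨w, hw, f, hf, hA⟩ := hh
      have : v = w := hsep v hv w hw g hg (hB1 f hf _ hA)
      subst this
      have := key1 g v hv f hf hA
      linarith
    · have h2 := key2 g hh
      have h3 := hxy v hv g hg (fun hA => hh ⟨v, hv, 1, h1, by simpa using hA⟩)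
      have := dist_triangle_right (g • z) (g • xv v) (g • y)
      linarith
  · intro g hg
    by_cases hh : ∃ v ∈ V, ∃ f ∈ F, f * (g * v⁻¹) ∈ A
    · obtain ⟨w, hw, f, hf, hA⟩ := hh
      have h2 := key1 g w hw f hf hA
      have h3 := hxy w hw g (hB1 f hf _ hA) (hg w hw)
      have := dist_triangle (g • z) (g • xv w) (g • y)
      linarith
    · have h2 := key2 g hh
      linarith

/-- Every expansive action of a countably infinite group `G` on a compact
metrizable space `X` with the topological Markov property has the uniform topological Markov
property. -/
theorem stmt3 (G X : Type*) [Group G] [Countable G] [Infinite G]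
    [MetricSpace X] [CompactSpace X] [MulAction G X]
    (hcont : ∀ g : G, Continuous fun x : X => g • x)
    (hexp : Expansive G X) (htmp : TMP G X) :
    UniformTMP G X := by
  classical
  obtain ⟨c, hc0, hc⟩ := hexp
  intro ε hε
  obtain ⟨ε', hε'0, hε'ε, hε'c⟩ : ∃ e : ℝ, 0 < e ∧ e ≤ ε ∧ 3 * e ≤ c :=
    ⟨min ε (c / 3), by positivity, min_le_left _ _, by
      have := min_le_right ε (c / 3); linarith⟩
  obtain ⟨δ₀, hδ₀, hmem⟩ := htmp ε' hε'0
  obtain ⟨δ, hδ, hδδ₀, hδε⟩ : ∃ e : ℝ, 0 < e ∧ 2 * e ≤ δ₀ ∧ 2 * e ≤ ε' :=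
    ⟨min (δ₀ / 2) (ε' / 2), by positivity, by
      have := min_le_left (δ₀ / 2) (ε' / 2); linarith, by
      have := min_le_right (δ₀ / 2) (ε' / 2); linarith⟩
  obtain ⟨F₀, hF₀⟩ := expansive_unif_aux hcont c hc δ hδ
  obtain ⟨F, h1, hF⟩ : ∃ F : Finset G, 1 ∈ F ∧
      ∀ x y : X, (∀ f ∈ F, dist (f • x) (f • y) ≤ c) → dist x y ≤ δ :=
    ⟨insert 1 F₀, Finset.mem_insert_self _ _, fun x y h =>
      hF₀ x y fun f hf => h f (Finset.mem_insert_of_mem hf)⟩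
  refine ⟨δ, hδ, fun A => ?_⟩
  obtain ⟨B₀, hAB₀, hB₀⟩ := hmem A
  obtain ⟨B, hB1, hB2, hB3⟩ : ∃ B : Finset G, (∀ f ∈ F, ∀ g, f * g ∈ A → g ∈ B) ∧
      (∀ f ∈ F, ∀ f' ∈ F, ∀ g, f * g ∈ A → f' * g ∈ B) ∧ ∀ f ∈ F, ∀ b ∈ B₀, f * b ∈ B := by
    have hm : ∀ f ∈ F, ∀ f' ∈ F, ∀ g, f * g ∈ A → f' * g ∈ F * (F⁻¹ * A) ∪ F * B₀ := by
      intro f hf f' hf' g hg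
      refine Finset.mem_union_left _ (Finset.mul_mem_mul hf' ?_)
      have : g = f⁻¹ * (f * g) := by group
      rw [this]
      exact Finset.mul_mem_mul (Finset.inv_mem_inv hf) hg
    refine ⟨F * (F⁻¹ * A) ∪ F * B₀, ?_, hm, ?_⟩
    · intro f hf g hg
      simpa using hm f hf 1 h1 g hg
    · intro f hf b hb
      exact Finset.mem_union_right _ (Finset.mul_mem_mul hf hb)
  have hB₀B : ∀ b ∈ B₀, b ∈ B := fun b hb => by simpa using hB3 1 h1 b hb
  have hAB : ∀ a ∈ A, a ∈ B := fun a ha => hB₀B a (by exact_mod_cast hAB₀ (by exact_mod_cast ha))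
  -- the main induction
  have main : ∀ (xv : G → X) (y : X) (V : Finset G),
      (∀ v ∈ V, ∀ w ∈ V, ∀ g : G, g * v⁻¹ ∈ B → g * w⁻¹ ∈ B → v = w) →
      (∀ v ∈ V, ∀ g : G, g * v⁻¹ ∈ B → g * v⁻¹ ∉ A → dist (g • xv v) (g • y) ≤ δ) →
      ∃ z, Follows A B V xv y ε' z := by
    intro xv y V
    induction V using Finset.induction_on with
    | empty =>
      intro _ _
      exact ⟨y, by simp, fun g _ => by simpa using hε'0.le⟩
    | insert v V hv ih =>
      intro hsep hxy
      obtain ⟨z, hz1, hz2⟩ := ih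
        (fun a ha b hb => hsep a (Finset.mem_insert_of_mem ha) b (Finset.mem_insert_of_mem hb))
        (fun a ha => hxy a (Finset.mem_insert_of_mem ha))
      have hvV := Finset.mem_insert_self v V
      have hoff : ∀ g, g * v⁻¹ ∈ B → ∀ w ∈ V, g * w⁻¹ ∉ B := by
        intro g hg w hw hgw
        have := hsep v hvV w (Finset.mem_insert_of_mem hw) g hg hgw
        exact hv (this ▸ hw)
      have hzy : ∀ g, g * v⁻¹ ∈ B → dist (g • z) (g • y) ≤ ε' := fun g hg =>
        hz2 g fun w hw hA => hoff g hg w hw (hAB _ hA)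
      have hzy' : ∀ g, g * v⁻¹ ∈ B₀ → dist (g • z) (g • y) ≤ δ := by
        intro g hg
        apply hF
        intro f hf
        rw [smul_smul, smul_smul]
        have := hzy (f * g) (by rw [mul_assoc]; exact hB3 f hf _ hg)
        linarith
      obtain ⟨w, hw1, hw2⟩ := hB₀ (v • xv v) (v • z) (by
        rw [supD_le_iff_aux _ _ _ _ hδ₀.le]
        rintro b ⟨hb, hbA⟩
        have hb : b ∈ B₀ := hb
        have hbA : b ∉ A := hbA
        rw [smul_smul, smul_smul]
        have e1 := hzy' (b * v) (by simpa using hb)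
        have e2 := hxy v hvV (b * v) (by simpa using hB₀B b hb) (by simpa using hbA)
        have := dist_triangle_right ((b * v) • xv v) ((b * v) • z) ((b * v) • y)
        linarith)
      rw [supD_le_iff_aux _ _ _ _ hε'0.le] at hw1 hw2
      have hw1' : ∀ g, g * v⁻¹ ∈ B₀ → dist (g • xv v) (g • v⁻¹ • w) ≤ ε' := by
        intro g hg
        have := hw1 (g * v⁻¹) hg
        simpa [smul_smul] using this
      have hw2' : ∀ g, g * v⁻¹ ∉ A → dist (g • z) (g • v⁻¹ • w) ≤ ε' := by
        intro g hg
        have := hw2 (g * v⁻¹) ⟨Set.mem_univ _, hg⟩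
        simpa [smul_smul] using this
      refine ⟨v⁻¹ • w, follows_upgrade A B F (insert v V) xv y (v⁻¹ • w) c δ δ ε' hδ.le hδ.le
        (by linarith) h1 hF hB1 hB2 hsep hxy ⟨?_, ?_⟩⟩
      · intro u hu g hg
        rcases Finset.mem_insert.1 hu with rfl | hu'
        · by_cases hgB : g * u⁻¹ ∈ B₀
          · have := hw1' g hgB
            rw [dist_comm] at this
            linarith
          · have hgA : g * u⁻¹ ∉ A := fun h => hgB (by exact_mod_cast hAB₀ (by exact_mod_cast h))
            have e1 := hw2' g hgA
            have e2 := hzy g hg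
            have e3 := hxy u hu g hg hgA
            have t1 := dist_triangle_left (g • u⁻¹ • w) (g • y) (g • z)
            have t2 := dist_triangle_right (g • u⁻¹ • w) (g • xv u) (g • y)
            linarith
        · have hgA : g * v⁻¹ ∉ A := fun h => hoff g (hAB _ h) u hu' hg
          have e1 := hw2' g hgA
          have e2 := hz1 u hu' g hg
          have t1 := dist_triangle_left (g • v⁻¹ • w) (g • xv u) (g • z)
          linarith
      · intro g hg
        have e1 := hw2' g (hg v hvV)
        have e2 := hz2 g fun u hu => hg u (Finset.mem_insert_of_mem hu)
        have t1 := dist_triangle_left (g • v⁻¹ • w) (g • y) (g • z)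
        linarith
  refine ⟨B, ⟨fun a ha => hAB a ha, ?_⟩, ?_⟩
  · intro x y hxy
    rw [supD_le_iff_aux _ _ _ _ hδ.le] at hxy
    obtain ⟨z, hz1, hz2⟩ := main (fun _ => x) y {1} (by simp) (by
      intro v hv g hg hgA
      obtain rfl := Finset.mem_singleton.1 hv
      rw [inv_one, mul_one] at hg hgA
      exact hxy g ⟨hg, hgA⟩)
    refine ⟨z, ?_, ?_⟩ <;> rw [supD_le_iff_aux _ _ _ _ hε.le]
    · intro g hg
      have hg : g ∈ B := hg
      have := hz1 1 (by simp) g (by simpa using hg)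
      rw [dist_comm]
      linarith
    · rintro g ⟨-, hg⟩
      have hg : g ∉ A := hg
      have := hz2 g (by simpa using hg)
      rw [dist_comm]
      linarith
  · intro V hsep xv y hxy
    have hmul : ∀ (S : Set G) (g v : G), g ∈ S * ({v} : Set G) ↔ g * v⁻¹ ∈ S := by
      intro S g v
      simp [Set.mul_singleton]
    obtain ⟨z, hz1, hz2⟩ := main xv y V (by
      intro v hv w hw g hgv hgw
      by_contra hne
      exact Set.disjoint_left.1 (hsep v hv w hw hne) ((hmul _ _ _).2 hgv) ((hmul _ _ _).2 hgw))
      (by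
        intro v hv g hg hgA
        exact (supD_le_iff_aux _ _ _ _ hδ.le).1 (hxy v hv) g ((hmul _ _ _).2 ⟨hg, hgA⟩))
    refine ⟨z, fun v hv => ?_, ?_⟩ <;> rw [supD_le_iff_aux _ _ _ _ hε.le]
    · intro g hg
      exact (hz1 v hv g ((hmul _ _ _).1 hg)).trans hε'ε
    · rintro g ⟨-, hg⟩
      refine (hz2 g fun v hv hA => hg ?_).trans hε'ε
      exact ⟨g * v⁻¹, hA, v, hv, by simp⟩
end

section
/- Let ρ be a dynamically generating continuous pseudometric on X for an action G ↷ X. Then: (1) G ↷ X has the TMP if and only if for every ε > 0 there is δ > 0 such that for every finite A ⊆ G there is a finite B ⊆ G containing A so that for all x,y ∈ X with ρ_{B∖A}(x,y) ≤ δ there is z ∈ X with ρ_B(z,x) ≤ ε and ρ_{G∖A}(z,y) ≤ ε; (2) G ↷ X has the strong TMP if and only if for every ε > 0 there are δ > 0 and a finite F ⊆ G containing the identity such that for every finite A ⊆ G and all x,y ∈ X with ρ_{FA∖A}(x,y) ≤ δ there is z ∈ X with ρ_{FA}(z,x) ≤ ε and ρ_{G∖A}(z,y) ≤ ε. -/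
open Pointwise

/-- Pointwise memory property. -/
def MemPt {G X : Type*} [SMul G X] (σ : X → X → ℝ) (ε δ : ℝ) (A B : Set G) : Prop :=
  ∀ x y : X, (∀ g ∈ B, g ∉ A → σ (g • x) (g • y) ≤ δ) →
    ∃ z : X, (∀ g ∈ B, σ (g • x) (g • z) ≤ ε) ∧ ∀ g ∉ A, σ (g • y) (g • z) ≤ ε

/-- `σ` controls `τ`. -/
def Ctrl (G : Type*) {X : Type*} [SMul G X] (σ τ : X → X → ℝ) : Prop :=
  ∀ ε > (0 : ℝ), ∃ δ > (0 : ℝ), ∃ S : Finset G, ∀ x y : X,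
    (∀ s ∈ S, σ (s • x) (s • y) ≤ δ) → τ x y ≤ ε

theorem supOf_le_iff {G X : Type*} [SMul G X] [TopologicalSpace X] [CompactSpace X]
    {σ : X → X → ℝ} (hσ : Continuous fun p : X × X => σ p.1 p.2) (K : Set G) (x y : X)
    {c : ℝ} (hc : 0 ≤ c) :
    supOf σ K x y ≤ c ↔ ∀ g ∈ K, σ (g • x) (g • y) ≤ c := by
  unfold supOf
  constructor
  · intro h g hg
    have hb : BddAbove (Set.range fun g : K => σ ((g : G) • x) ((g : G) • y)) := by
      refine (isCompact_range hσ).bddAbove.mono ?_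
      rintro _ ⟨g, rfl⟩
      exact ⟨((g : G) • x, (g : G) • y), rfl⟩
    exact (le_ciSup hb ⟨g, hg⟩).trans h
  · intro h
    exact Real.iSup_le (fun g => h g g.2) hc

/-- The core transfer step. -/
theorem memPt_transfer {G X : Type*} [Group G] [MulAction G X] {σ τ : X → X → ℝ}
    (σtri : ∀ x y z : X, σ x z ≤ σ x y + σ y z)
    (τsymm : ∀ x y : X, τ x y = τ y x) (τtri : ∀ x y z : X, τ x z ≤ τ x y + τ y z)
    {ε η δ' δ : ℝ} (hε : 0 < ε) {S T : Finset G} (hδ' : δ' ≤ η / 2) (hδ : δ ≤ ε / 3)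
    (hS : ∀ x y : X, (∀ s ∈ S, σ (s • x) (s • y) ≤ η) → τ x y ≤ ε / 3)
    (hη : 0 < η)
    (hT : ∀ x y : X, (∀ s ∈ T, τ (s • x) (s • y) ≤ δ) → σ x y ≤ δ')
    {A A' B' B : Set G} (hSA : ∀ s ∈ S, ∀ a ∈ A, s * a ∈ A')
    (hTA : ∀ t ∈ T, ∀ h, t * h ∈ A → h ∈ A')
    (hAB' : A' ⊆ B') (hmem : MemPt (X := X) σ (η / 2) δ' A' B')
    (h1 : ∀ t ∈ T, ∀ b ∈ B', t * b ∈ B)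
    (h2 : ∀ s ∈ S, ∀ g, s * g ∈ A' → g ∈ B)
    (h3 : ∀ t ∈ T, ∀ s ∈ S, ∀ s' ∈ S, ∀ g, s' * g ∈ A' → t * (s * g) ∈ B) :
    MemPt (X := X) τ ε δ A B := by
  intro x y hxy
  obtain ⟨z, hz1, hz2⟩ := hmem x y (by
    intro g hg hgA
    refine hT _ _ fun t ht => ?_
    rw [smul_smul, smul_smul]
    exact hxy _ (h1 t ht g hg) fun h => hgA (hTA t ht g h))
  have key : ∀ g ∉ A, τ (g • y) (g • z) ≤ 2 * ε / 3 := by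
    intro g hg
    by_cases hc : ∃ s' ∈ S, s' * g ∈ A'
    · obtain ⟨s', hs', hs'g⟩ := hc
      have hxz : τ (g • x) (g • z) ≤ ε / 3 := by
        refine hS _ _ fun s hs => ?_
        rw [smul_smul, smul_smul]
        by_cases hsg : s * g ∈ A'
        · linarith [hz1 _ (hAB' hsg)]
        · have e1 : σ ((s * g) • x) ((s * g) • y) ≤ δ' := by
            refine hT _ _ fun t ht => ?_
            rw [smul_smul, smul_smul]
            exact hxy _ (h3 t ht s hs s' hs' g hs'g) fun h => hsg (hTA t ht _ h)
          linarith [hz2 _ hsg, σtri ((s * g) • x) ((s * g) • y) ((s * g) • z)]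
      have e := hxy g (h2 s' hs' g hs'g) hg
      rw [τsymm] at e
      linarith [τtri (g • y) (g • x) (g • z)]
    · push Not at hc
      have : τ (g • y) (g • z) ≤ ε / 3 := by
        refine hS _ _ fun s hs => ?_
        rw [smul_smul, smul_smul]
        linarith [hz2 _ (hc s hs)]
      linarith
  refine ⟨z, fun g hg => ?_, fun g hg => by linarith [key g hg]⟩
  by_cases hgA : g ∈ A
  · have : τ (g • x) (g • z) ≤ ε / 3 := by
      refine hS _ _ fun s hs => ?_
      rw [smul_smul, smul_smul]
      linarith [hz1 _ (hAB' (hSA s hs g hgA))]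
    linarith
  · linarith [key g hgA, hxy g hg hgA, τtri (g • x) (g • y) (g • z)]

theorem memPt_mono {G X : Type*} [SMul G X] {σ : X → X → ℝ} {ε δ δ' : ℝ} {A B : Set G}
    (h : MemPt (X := X) σ ε δ A B) (hd : δ' ≤ δ) : MemPt (X := X) σ ε δ' A B :=
  fun x y hxy => h x y fun g hg hgA => (hxy g hg hgA).trans hd

theorem ctrl_le {G X : Type*} [SMul G X] {σ τ : X → X → ℝ} (h : Ctrl G σ τ) {ε c : ℝ}
    (hε : 0 < ε) (hc : 0 < c) : ∃ δ > (0 : ℝ), δ ≤ c ∧ ∃ S : Finset G, ∀ x y : X,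
    (∀ s ∈ S, σ (s • x) (s • y) ≤ δ) → τ x y ≤ ε := by
  obtain ⟨δ, hδ, S, hS⟩ := h ε hε
  exact ⟨min δ c, lt_min hδ hc, min_le_right _ _, S, fun x y hxy =>
    hS x y fun s hs => (hxy s hs).trans (min_le_left _ _)⟩

theorem weak_transfer {G X : Type*} [Group G] [DecidableEq G] [MulAction G X] {σ τ : X → X → ℝ}
    (σtri : ∀ x y z : X, σ x z ≤ σ x y + σ y z)
    (τsymm : ∀ x y : X, τ x y = τ y x) (τtri : ∀ x y z : X, τ x z ≤ τ x y + τ y z)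
    (hστ : Ctrl G σ τ) (hτσ : Ctrl G τ σ)
    (H : ∀ ε > (0 : ℝ), ∃ δ > (0 : ℝ), ∀ A : Finset G, ∃ B : Finset G, A ⊆ B ∧
      MemPt (X := X) σ ε δ (A : Set G) B) :
    ∀ ε > (0 : ℝ), ∃ δ > (0 : ℝ), ∀ A : Finset G, ∃ B : Finset G, A ⊆ B ∧
      MemPt (X := X) τ ε δ (A : Set G) B := by
  intro ε hε
  obtain ⟨η, hη, S, hS⟩ := hστ (ε / 3) (by positivity)
  obtain ⟨δ₀, hδ₀, H⟩ := H (η / 2) (by positivity)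
  obtain ⟨δ, hδ, hδε, T, hT⟩ := ctrl_le hτσ (ε := min δ₀ (η / 2)) (c := ε / 3)
    (by positivity) (by positivity)
  refine ⟨δ, hδ, fun A => ?_⟩
  obtain ⟨B', hAB', hB'⟩ := H ((S ∪ T⁻¹) * A)
  refine ⟨A ∪ (S⁻¹ * ((S ∪ T⁻¹) * A) ∪ T * (B' ∪ S * (S⁻¹ * ((S ∪ T⁻¹) * A)))),
    Finset.subset_union_left, ?_⟩
  have inv : ∀ s ∈ S, ∀ g, s * g ∈ (S ∪ T⁻¹) * A → g ∈ S⁻¹ * ((S ∪ T⁻¹) * A) := by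
    intro s hs g hg
    simpa using Finset.mul_mem_mul (Finset.inv_mem_inv hs) hg
  refine memPt_transfer σtri τsymm τtri hε (min_le_right _ _) hδε hS hη hT
    (A' := (((S ∪ T⁻¹) * A : Finset G) : Set G)) (B' := (B' : Set G)) ?_ ?_ ?_
    (memPt_mono hB' (min_le_left _ _)) ?_ ?_ ?_
  · intro s hs a ha
    exact Finset.mem_coe.2 (Finset.mul_mem_mul (Finset.mem_union_left _ hs) ha)
  · intro t ht h hh
    have := Finset.mul_mem_mul (Finset.mem_union_right S (Finset.inv_mem_inv ht))
      (Finset.mem_coe.1 hh)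
    simpa only [inv_mul_cancel_left] using Finset.mem_coe.2 this
  · exact_mod_cast hAB'
  · intro t ht b hb
    exact Finset.mem_coe.2 (Finset.mem_union_right _ (Finset.mem_union_right _
      (Finset.mul_mem_mul ht (Finset.mem_union_left _ hb))))
  · intro s hs g hg
    exact Finset.mem_coe.2 (Finset.mem_union_right _ (Finset.mem_union_left _ (inv s hs g hg)))
  · intro t ht s hs s' hs' g hg
    exact Finset.mem_coe.2 (Finset.mem_union_right _ (Finset.mem_union_right _
      (Finset.mul_mem_mul ht (Finset.mem_union_right _
        (Finset.mul_mem_mul hs (inv s' hs' g hg))))))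

theorem strong_transfer {G X : Type*} [Group G] [DecidableEq G] [MulAction G X]
    {σ τ : X → X → ℝ}
    (σtri : ∀ x y z : X, σ x z ≤ σ x y + σ y z)
    (τsymm : ∀ x y : X, τ x y = τ y x) (τtri : ∀ x y z : X, τ x z ≤ τ x y + τ y z)
    (hστ : Ctrl G σ τ) (hτσ : Ctrl G τ σ)
    (H : ∀ ε > (0 : ℝ), ∃ δ > (0 : ℝ), ∃ F : Finset G, (1 : G) ∈ F ∧ ∀ A : Finset G,
      MemPt (X := X) σ ε δ (A : Set G) ((F * A : Finset G) : Set G)) :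
    ∀ ε > (0 : ℝ), ∃ δ > (0 : ℝ), ∃ F : Finset G, (1 : G) ∈ F ∧ ∀ A : Finset G,
      MemPt (X := X) τ ε δ (A : Set G) ((F * A : Finset G) : Set G) := by
  intro ε hε
  obtain ⟨η, hη, S, hS⟩ := hστ (ε / 3) (by positivity)
  obtain ⟨δ₀, hδ₀, F', hF', H⟩ := H (η / 2) (by positivity)
  obtain ⟨δ, hδ, hδε, T, hT⟩ := ctrl_le hτσ (ε := min δ₀ (η / 2)) (c := ε / 3)
    (by positivity) (by positivity)
  refine ⟨δ, hδ, {1} ∪ (S⁻¹ * (S ∪ T⁻¹) ∪ T * (F' * (S ∪ T⁻¹) ∪ S * (S⁻¹ * (S ∪ T⁻¹)))),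
    by simp, fun A => ?_⟩
  have hB' := H ((S ∪ T⁻¹) * A)
  have inv : ∀ s ∈ S, ∀ g, s * g ∈ (S ∪ T⁻¹) * A → g ∈ S⁻¹ * ((S ∪ T⁻¹) * A) := by
    intro s hs g hg
    simpa using Finset.mul_mem_mul (Finset.inv_mem_inv hs) hg
  have e : ({1} ∪ (S⁻¹ * (S ∪ T⁻¹) ∪ T * (F' * (S ∪ T⁻¹) ∪ S * (S⁻¹ * (S ∪ T⁻¹))))) * A =
      A ∪ (S⁻¹ * ((S ∪ T⁻¹) * A) ∪ T * (F' * ((S ∪ T⁻¹) * A) ∪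
        S * (S⁻¹ * ((S ∪ T⁻¹) * A)))) := by
    generalize S ∪ T⁻¹ = U
    simp only [Finset.union_mul, Finset.mul_union, mul_assoc, Finset.singleton_mul,
      one_smul]
  rw [e]
  refine memPt_transfer σtri τsymm τtri hε (min_le_right _ _) hδε hS hη hT
    (A' := (((S ∪ T⁻¹) * A : Finset G) : Set G))
    (B' := ((F' * ((S ∪ T⁻¹) * A) : Finset G) : Set G)) ?_ ?_ ?_
    (memPt_mono hB' (min_le_left _ _)) ?_ ?_ ?_
  · intro s hs a ha
    exact Finset.mem_coe.2 (Finset.mul_mem_mul (Finset.mem_union_left _ hs) ha)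
  · intro t ht h hh
    have := Finset.mul_mem_mul (Finset.mem_union_right S (Finset.inv_mem_inv ht))
      (Finset.mem_coe.1 hh)
    simpa only [inv_mul_cancel_left] using Finset.mem_coe.2 this
  · exact Finset.coe_subset.2 (Finset.subset_mul_right _ hF')
  · intro t ht b hb
    exact Finset.mem_coe.2 (Finset.mem_union_right _ (Finset.mem_union_right _
      (Finset.mul_mem_mul ht (Finset.mem_union_left _ hb))))
  · intro s hs g hg
    exact Finset.mem_coe.2 (Finset.mem_union_right _ (Finset.mem_union_left _ (inv s hs g hg)))
  · intro t ht s hs s' hs' g hg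
    exact Finset.mem_coe.2 (Finset.mem_union_right _ (Finset.mem_union_right _
      (Finset.mul_mem_mul ht (Finset.mem_union_right _
        (Finset.mul_mem_mul hs (inv s' hs' g hg))))))

theorem ctrl_of_cont {G X : Type*} [Group G] [MetricSpace X] [CompactSpace X] [MulAction G X]
    (hcont : ∀ g : G, Continuous fun x : X => g • x) {σ τ : X → X → ℝ}
    (σcont : Continuous fun p : X × X => σ p.1 p.2)
    (τcont : Continuous fun p : X × X => τ p.1 p.2)
    (τself : ∀ x : X, τ x x = 0)
    (σgen : ∀ x y : X, x ≠ y → ∃ s : G, 0 < σ (s • x) (s • y)) : Ctrl G σ τ := by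
  intro ε hε
  have hK : IsCompact {p : X × X | ε ≤ τ p.1 p.2} :=
    (isClosed_le continuous_const τcont).isCompact
  obtain ⟨t, ht⟩ := hK.elim_finite_subcover
    (fun i : G × ℕ => {p : X × X | 1 / ((i.2 : ℝ) + 1) < σ (i.1 • p.1) (i.1 • p.2)})
    (fun i => isOpen_lt continuous_const (σcont.comp
      (((hcont i.1).comp continuous_fst).prodMk ((hcont i.1).comp continuous_snd)))) (by
      rintro ⟨x, y⟩ hp
      have hp : ε ≤ τ x y := hp
      have hne : x ≠ y := by
        rintro rfl
        rw [τself] at hp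
        linarith
      obtain ⟨s, hs⟩ := σgen x y hne
      obtain ⟨n, hn⟩ := exists_nat_one_div_lt hs
      exact Set.mem_iUnion.2 ⟨(s, n), hn⟩)
  classical
  refine ⟨1 / (((t.sup Prod.snd : ℕ) : ℝ) + 1), by positivity, t.image Prod.fst, ?_⟩
  intro x y h
  by_contra hc
  push Not at hc
  have := ht (show (x, y) ∈ {p : X × X | ε ≤ τ p.1 p.2} from hc.le)
  simp only [Set.mem_iUnion] at this
  obtain ⟨i, hi, hlt⟩ := this
  have hlt : 1 / ((i.2 : ℝ) + 1) < σ (i.1 • x) (i.1 • y) := hlt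
  have h1 := h i.1 (Finset.mem_image_of_mem _ hi)
  have h2 : i.2 ≤ t.sup Prod.snd := Finset.le_sup (f := Prod.snd) hi
  have h3 : 1 / (((t.sup Prod.snd : ℕ) : ℝ) + 1) ≤ 1 / ((i.2 : ℝ) + 1) := by
    gcongr
  linarith

/-- Let `ρ` be a dynamically generating continuous pseudometric on `X` for an
action `G ↷ X`.  Then (1) the action has the TMP iff for every `ε > 0` there is `δ > 0` such
that for every finite `A ⊆ G` there is a finite `B ⊇ A` so that for all `x,y` with
`ρ_{B∖A}(x,y) ≤ δ` there is `z` with `ρ_B(z,x) ≤ ε` and `ρ_{G∖A}(z,y) ≤ ε`; and (2) the action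
has the strong TMP iff for every `ε > 0` there are `δ > 0` and a finite `F ∋ 1` such that for
every finite `A ⊆ G` and all `x,y` with `ρ_{FA∖A}(x,y) ≤ δ` there is `z` with
`ρ_{FA}(z,x) ≤ ε` and `ρ_{G∖A}(z,y) ≤ ε`. -/
theorem stmt4 (G X : Type*) [Group G] [Countable G] [Infinite G] [DecidableEq G]
    [MetricSpace X] [CompactSpace X] [MulAction G X]
    (hcont : ∀ g : G, Continuous fun x : X => g • x)
    (ρ : X → X → ℝ)
    (hρ_self : ∀ x : X, ρ x x = 0)
    (hρ_symm : ∀ x y : X, ρ x y = ρ y x)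
    (hρ_tri : ∀ x y z : X, ρ x z ≤ ρ x y + ρ y z)
    (hρ_cont : Continuous fun p : X × X => ρ p.1 p.2)
    (hρ_gen : ∀ x y : X, x ≠ y → ∃ s : G, 0 < ρ (s • x) (s • y)) :
    (TMP G X ↔
      ∀ ε > (0 : ℝ), ∃ δ > (0 : ℝ), ∀ A : Finset G, ∃ B : Finset G,
        (A : Set G) ⊆ (B : Set G) ∧
        ∀ x y : X, supOf ρ ((B : Set G) \ (A : Set G)) x y ≤ δ →
          ∃ z : X, supOf ρ (B : Set G) z x ≤ ε ∧
            supOf ρ (Set.univ \ (A : Set G)) z y ≤ ε) ∧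
    (StrongTMP G X ↔
      ∀ ε > (0 : ℝ), ∃ δ > (0 : ℝ), ∃ F : Finset G, (1 : G) ∈ F ∧
        ∀ A : Finset G, ∀ x y : X,
          supOf ρ (((F * A : Finset G) : Set G) \ (A : Set G)) x y ≤ δ →
          ∃ z : X, supOf ρ ((F * A : Finset G) : Set G) z x ≤ ε ∧
            supOf ρ (Set.univ \ (A : Set G)) z y ≤ ε) := by
  have dcont : Continuous fun p : X × X => dist p.1 p.2 := continuous_dist
  have c1 : Ctrl G (dist : X → X → ℝ) ρ := ctrl_of_cont hcont dcont hρ_cont hρ_self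
    fun x y h => ⟨1, by simpa using h⟩
  have c2 : Ctrl G ρ (dist : X → X → ℝ) := ctrl_of_cont hcont hρ_cont dcont dist_self hρ_gen
  have key1 : ∀ {ε δ : ℝ}, 0 < ε → 0 < δ → ∀ A B : Finset G,
      ((∀ x y : X, supD ((B : Set G) \ (A : Set G)) x y ≤ δ →
        ∃ z : X, supD (B : Set G) x z ≤ ε ∧ supD (Set.univ \ (A : Set G)) y z ≤ ε) ↔
      MemPt (X := X) dist ε δ (A : Set G) (B : Set G)) := by
    intro ε δ hε hδ A B
    simp only [supD, supOf_le_iff dcont _ _ _ hε.le, supOf_le_iff dcont _ _ _ hδ.le, MemPt,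
      Set.mem_sdiff, Set.mem_univ, true_and, and_imp]
  have key2 : ∀ {ε δ : ℝ}, 0 < ε → 0 < δ → ∀ A B : Finset G,
      ((∀ x y : X, supOf ρ ((B : Set G) \ (A : Set G)) x y ≤ δ →
        ∃ z : X, supOf ρ (B : Set G) z x ≤ ε ∧ supOf ρ (Set.univ \ (A : Set G)) z y ≤ ε) ↔
      MemPt (X := X) ρ ε δ (A : Set G) (B : Set G)) := by
    intro ε δ hε hδ A B
    have hs : ∀ (g : G) (z x : X), ρ (g • z) (g • x) = ρ (g • x) (g • z) :=
      fun g z x => hρ_symm _ _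
    simp only [supOf_le_iff hρ_cont _ _ _ hε.le, supOf_le_iff hρ_cont _ _ _ hδ.le, MemPt,
      Set.mem_sdiff, Set.mem_univ, true_and, and_imp]
    constructor
    · intro h x y hxy
      obtain ⟨z, h1, h2⟩ := h x y hxy
      exact ⟨z, fun g hg => (hs g x z).trans_le (h1 g hg),
        fun g hg => (hs g y z).trans_le (h2 g hg)⟩
    · intro h x y hxy
      obtain ⟨z, h1, h2⟩ := h x y hxy
      exact ⟨z, fun g hg => (hs g z x).trans_le (h1 g hg),
        fun g hg => (hs g z y).trans_le (h2 g hg)⟩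
  constructor
  · constructor
    · intro H ε hε
      obtain ⟨δ, hδ, h⟩ := weak_transfer dist_triangle hρ_symm hρ_tri c1 c2 (fun ε hε => by
        obtain ⟨δ, hδ, h⟩ := H ε hε
        refine ⟨δ, hδ, fun A => ?_⟩
        obtain ⟨B, hAB, hB⟩ := h A
        exact ⟨B, Finset.coe_subset.1 hAB, (key1 hε hδ A B).1 hB⟩) ε hε
      refine ⟨δ, hδ, fun A => ?_⟩
      obtain ⟨B, hAB, hB⟩ := h A
      exact ⟨B, Finset.coe_subset.2 hAB, (key2 hε hδ A B).2 hB⟩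
    · intro H ε hε
      obtain ⟨δ, hδ, h⟩ := weak_transfer hρ_tri dist_comm dist_triangle c2 c1 (fun ε hε => by
        obtain ⟨δ, hδ, h⟩ := H ε hε
        refine ⟨δ, hδ, fun A => ?_⟩
        obtain ⟨B, hAB, hB⟩ := h A
        exact ⟨B, Finset.coe_subset.1 hAB, (key2 hε hδ A B).1 hB⟩) ε hε
      refine ⟨δ, hδ, fun A => ?_⟩
      obtain ⟨B, hAB, hB⟩ := h A
      exact ⟨B, Finset.coe_subset.2 hAB, (key1 hε hδ A B).2 hB⟩
  · constructor
    · intro H ε hε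
      obtain ⟨δ, hδ, F, hF, h⟩ := strong_transfer dist_triangle hρ_symm hρ_tri c1 c2
        (fun ε hε => by
          obtain ⟨δ, hδ, F, hF, h⟩ := H ε hε
          exact ⟨δ, hδ, F, hF, fun A => (key1 hε hδ A (F * A)).1 (h A).2⟩) ε hε
      exact ⟨δ, hδ, F, hF, fun A => (key2 hε hδ A (F * A)).2 (h A)⟩
    · intro H ε hε
      obtain ⟨δ, hδ, F, hF, h⟩ := strong_transfer hρ_tri dist_comm dist_triangle c2 c1
        (fun ε hε => by
          obtain ⟨δ, hδ, F, hF, h⟩ := H ε hε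
          exact ⟨δ, hδ, F, hF, fun A => (key2 hε hδ A (F * A)).1 (h A)⟩) ε hε
      exact ⟨δ, hδ, F, hF, fun A => ⟨Finset.coe_subset.2 (Finset.subset_mul_right _ hF),
        (key1 hε hδ A (F * A)).2 (h A)⟩⟩
end

section
/- Let Λ be a nonempty finite set and X ⊆ Λ^G a G-subshift with the left shift action. Then: (1) G ↷ X has the TMP if and only if for every finite A ⊆ G there is a finite B ⊆ G containing A such that for any x,y ∈ X with x = y on B∖A, the configuration z ∈ Λ^G defined by z = x on A and z = y on G∖A lies in X; (2) G ↷ X has the strong TMP if and only if there is a finite F ⊆ G containing the identity such that for every finite A ⊆ G and any x,y ∈ X with x = y on AF∖A, the configuration z ∈ Λ^G defined by z = x on A and z = y on G∖A lies in X. -/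
open Pointwise

/-- The left shift action of `G` on configurations `G → Λ`, `(g • x) h = x (g⁻¹ h)`. -/
instance shiftAction (G Λ : Type*) [Group G] : MulAction G (G → Λ) where
  smul g x := fun h => x (g⁻¹ * h)
  one_smul x := by
    funext h; show x (1⁻¹ * h) = x h; simp
  mul_smul g₁ g₂ x := by
    funext h; show x ((g₁ * g₂)⁻¹ * h) = x (g₂⁻¹ * (g₁⁻¹ * h)); simp [mul_inv_rev, mul_assoc]

section helpers

variable {G Λ : Type*} [Group G] [Fintype Λ] [MetricSpace (G → Λ)] [CompactSpace (G → Λ)]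

lemma aux_clopen (hcompat : (inferInstance : TopologicalSpace (G → Λ)) =
      @Pi.topologicalSpace G (fun _ => Λ) (fun _ => ⊥)) (g : G) (s : Set Λ) :
    IsOpen {x : G → Λ | x g ∈ s} := by
  have h : @IsOpen (G → Λ) (@Pi.topologicalSpace G (fun _ => Λ) (fun _ => ⊥))
      {x : G → Λ | x g ∈ s} := by
    have hc := @continuous_apply G (fun _ => Λ) (fun _ => ⊥) g
    exact (@continuous_def _ _ (_) (_) _).1 hc s (@isOpen_discrete Λ ⊥ (@DiscreteTopology.mk _ ⊥ rfl) s)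
  rw [← hcompat] at h
  exact h

lemma aux_open_ne (hcompat : (inferInstance : TopologicalSpace (G → Λ)) =
      @Pi.topologicalSpace G (fun _ => Λ) (fun _ => ⊥)) (g : G) :
    IsOpen {p : (G → Λ) × (G → Λ) | p.1 g ≠ p.2 g} := by
  have : {p : (G → Λ) × (G → Λ) | p.1 g ≠ p.2 g} =
      ⋃ l : Λ, (Prod.fst ⁻¹' {x : G → Λ | x g ∈ ({l} : Set Λ)}) ∩
        (Prod.snd ⁻¹' {x : G → Λ | x g ∈ ({l}ᶜ : Set Λ)}) := by
    ext p
    simp [eq_comm]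
  rw [this]
  exact isOpen_iUnion fun l => ((aux_clopen hcompat g _).preimage continuous_fst).inter
    ((aux_clopen hcompat g _).preimage continuous_snd)

lemma aux_open_eq (hcompat : (inferInstance : TopologicalSpace (G → Λ)) =
      @Pi.topologicalSpace G (fun _ => Λ) (fun _ => ⊥)) (g : G) :
    IsOpen {p : (G → Λ) × (G → Λ) | p.1 g = p.2 g} := by
  have : {p : (G → Λ) × (G → Λ) | p.1 g = p.2 g} =
      ⋃ l : Λ, (Prod.fst ⁻¹' {x : G → Λ | x g ∈ ({l} : Set Λ)}) ∩
        (Prod.snd ⁻¹' {x : G → Λ | x g ∈ ({l} : Set Λ)}) := by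
    ext p
    simp [eq_comm]
  rw [this]
  exact isOpen_iUnion fun l => ((aux_clopen hcompat g _).preimage continuous_fst).inter
    ((aux_clopen hcompat g _).preimage continuous_snd)

lemma aux_W [DecidableEq G] (hcompat : (inferInstance : TopologicalSpace (G → Λ)) =
      @Pi.topologicalSpace G (fun _ => Λ) (fun _ => ⊥)) (ε : ℝ) (hε : 0 < ε) :
    ∃ W : Finset G, (1 : G) ∈ W ∧ (∀ w ∈ W, w⁻¹ ∈ W) ∧
      ∀ x y : G → Λ, (∀ w ∈ W, x w = y w) → dist x y ≤ ε := by
  have hS : IsCompact {p : (G → Λ) × (G → Λ) | ε ≤ dist p.1 p.2} :=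
    (isClosed_le continuous_const continuous_dist).isCompact
  obtain ⟨t, ht⟩ := hS.elim_finite_subcover
    (fun g : G => {p : (G → Λ) × (G → Λ) | p.1 g ≠ p.2 g}) (aux_open_ne hcompat) (by
      intro p hp
      by_contra hn
      simp only [Set.mem_iUnion, Set.mem_setOf_eq, not_exists, not_not] at hn
      have : p.1 = p.2 := funext hn
      simp only [Set.mem_setOf_eq, this, dist_self] at hp
      linarith)
  refine ⟨insert 1 (t ∪ t⁻¹), by simp, ?_, ?_⟩
  · intro w hw
    simp only [Finset.mem_insert, Finset.mem_union, Finset.mem_inv', inv_eq_one, inv_inv] at hw ⊢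
    tauto
  · intro x y h
    by_contra hn
    have := ht (show (x, y) ∈ _ from (not_le.1 hn).le)
    simp only [Set.mem_iUnion, Set.mem_setOf_eq] at this
    obtain ⟨g, hg, hne⟩ := this
    exact hne (h g (by simp [hg]))

lemma aux_δ (hcompat : (inferInstance : TopologicalSpace (G → Λ)) =
      @Pi.topologicalSpace G (fun _ => Λ) (fun _ => ⊥)) (W : Finset G) :
    ∃ δ > (0 : ℝ), ∀ x y : G → Λ, dist x y ≤ δ → ∀ w ∈ W, x w = y w := by
  have hS : IsCompact {p : (G → Λ) × (G → Λ) | ∀ w ∈ W, p.1 w = p.2 w}ᶜ := by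
    apply IsClosed.isCompact
    rw [isClosed_compl_iff]
    have : {p : (G → Λ) × (G → Λ) | ∀ w ∈ W, p.1 w = p.2 w} =
        ⋂ w ∈ W, {p : (G → Λ) × (G → Λ) | p.1 w = p.2 w} := by
      ext p; simp
    rw [this]
    exact isOpen_biInter_finset fun w _ => aux_open_eq hcompat w
  rcases Set.eq_empty_or_nonempty
    ({p : (G → Λ) × (G → Λ) | ∀ w ∈ W, p.1 w = p.2 w}ᶜ) with he | hne
  · refine ⟨1, one_pos, fun x y _ => ?_⟩
    have : (x, y) ∈ {p : (G → Λ) × (G → Λ) | ∀ w ∈ W, p.1 w = p.2 w} := by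
      rw [Set.compl_empty_iff.1 he]; trivial
    exact this
  · obtain ⟨p, hp, hmin⟩ := hS.exists_isMinOn hne
      (continuous_dist (α := G → Λ)).continuousOn
    have hpos : 0 < dist p.1 p.2 := by
      rw [dist_pos]
      intro h
      exact hp (fun w _ => by rw [h])
    refine ⟨dist p.1 p.2 / 2, by positivity, fun x y hxy => ?_⟩
    by_contra hn
    have := hmin (show (x, y) ∈ _ from hn)
    simp only [Set.mem_setOf_eq] at this
    linarith

lemma aux_supD_le {K : Set G} {x y : G → Λ} {c : ℝ} (hc : 0 ≤ c)
    (h : ∀ g ∈ K, dist (g • x) (g • y) ≤ c) : supD K x y ≤ c :=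
  Real.iSup_le (fun g => h g g.2) hc

lemma aux_le_supD {K : Set G} {x y : G → Λ} {c : ℝ} (h : supD K x y ≤ c) {g : G} (hg : g ∈ K) :
    dist (g • x) (g • y) ≤ c := by
  refine le_trans ?_ h
  refine le_ciSup (f := fun g : K => dist ((g : G) • x) ((g : G) • y)) ?_ ⟨g, hg⟩
  refine ⟨Metric.diam (Set.univ : Set (G → Λ)), ?_⟩
  rintro _ ⟨k, rfl⟩
  exact Metric.dist_le_diam_of_mem isCompact_univ.isBounded trivial trivial

lemma aux_smul (g h : G) (x : G → Λ) : (g • x) h = x (g⁻¹ * h) := rfl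

/-- From metric memory sets to combinatorial gluing. -/
lemma aux_fwd [DecidableEq G] (X : Set (G → Λ)) (ε δ : ℝ) (hδ : 0 < δ)
    (hε : ∀ x y : G → Λ, dist x y ≤ ε → x 1 = y 1)
    (W : Finset G) (h1 : (1 : G) ∈ W) (hinv : ∀ w ∈ W, w⁻¹ ∈ W)
    (hW : ∀ x y : G → Λ, (∀ w ∈ W, x w = y w) → dist x y ≤ δ)
    (A B' B : Finset G) (hB' : (A * W)⁻¹ ⊆ B') (hB : ∀ b ∈ B', ∀ w ∈ W, b⁻¹ * w ∈ B)
    (hmem : ∀ x ∈ X, ∀ y ∈ X,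
      supD ((B' : Set G) \ (((A * W)⁻¹ : Finset G) : Set G)) x y ≤ δ →
      ∃ z ∈ X, supD (B' : Set G) x z ≤ ε ∧
        supD (Set.univ \ (((A * W)⁻¹ : Finset G) : Set G)) y z ≤ ε)
    (x : G → Λ) (hx : x ∈ X) (y : G → Λ) (hy : y ∈ X)
    (hxy : ∀ g ∈ (B : Set G) \ (A : Set G), x g = y g) :
    (fun g => if g ∈ A then x g else y g) ∈ X := by
  obtain ⟨z, hz, hzx, hzy⟩ := hmem x hx y hy (by
    refine aux_supD_le hδ.le fun g hg => hW _ _ fun w hw => ?_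
    rw [aux_smul, aux_smul]
    refine hxy _ ⟨hB g hg.1 w hw, fun hA => hg.2 ?_⟩
    simp only [Finset.coe_inv, Set.mem_inv, Finset.mem_coe]
    have := Finset.mul_mem_mul (Finset.mem_coe.1 hA) (hinv w hw)
    simpa using this)
  have hzx' : ∀ g, g⁻¹ ∈ B' → x g = z g := fun g hg => by
    have := hε _ _ (aux_le_supD hzx (Finset.mem_coe.2 hg))
    simpa [aux_smul] using this
  have hzy' : ∀ g, g ∉ A * W → y g = z g := fun g hg => by
    have := hε _ _ (aux_le_supD hzy (g := g⁻¹) ⟨trivial, fun h => hg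
      (by simpa only [Finset.mem_inv', inv_inv] using Finset.mem_coe.1 h)⟩)
    simpa [aux_smul] using this
  convert hz using 1
  funext g
  by_cases hAW : g ∈ A * W
  · have hgB : g⁻¹ ∈ B' := hB' (Finset.inv_mem_inv hAW)
    rw [← hzx' g hgB]
    split_ifs with hA
    · rfl
    · refine (hxy g ⟨?_, hA⟩).symm
      simpa using hB _ hgB 1 h1
  · rw [← hzy' g hAW, if_neg]
    intro hA
    exact hAW (by simpa using Finset.mul_mem_mul hA h1)

/-- From combinatorial gluing to metric memory sets. -/
lemma aux_bwd [DecidableEq G] (X : Set (G → Λ)) (ε δ : ℝ) (hε : 0 < ε)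
    (W : Finset G) (h1 : (1 : G) ∈ W) (hinv : ∀ w ∈ W, w⁻¹ ∈ W)
    (hW : ∀ x y : G → Λ, (∀ w ∈ W, x w = y w) → dist x y ≤ ε)
    (hδ : ∀ x y : G → Λ, dist x y ≤ δ → ∀ w ∈ W, x w = y w)
    (A C D B : Finset G) (hC : ∀ g, g ∈ C ↔ ∀ w ∈ W, (g * w)⁻¹ ∈ A)
    (hD : ∀ d ∈ D, ∀ w ∈ W, (d * w)⁻¹ ∈ B)
    (hA : ∀ a ∈ A, ∀ v ∈ W, ∀ w ∈ W, (a⁻¹ * v * w)⁻¹ ∈ B)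
    (hglue : ∀ x ∈ X, ∀ y ∈ X, (∀ g ∈ (D : Set G) \ (C : Set G), x g = y g) →
          (fun g => if g ∈ C then x g else y g) ∈ X)
    (x : G → Λ) (hx : x ∈ X) (y : G → Λ) (hy : y ∈ X)
    (hxy : supD ((B : Set G) \ (A : Set G)) x y ≤ δ) :
    ∃ z ∈ X, supD (B : Set G) x z ≤ ε ∧ supD (Set.univ \ (A : Set G)) y z ≤ ε := by
  have key : ∀ b ∈ B, b ∉ A → ∀ w ∈ W, x (b⁻¹ * w) = y (b⁻¹ * w) := fun b hb hbA w hw =>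
    hδ _ _ (aux_le_supD hxy ⟨hb, hbA⟩) w hw
  have key2 : ∀ g, g ∉ C → (∀ w ∈ W, (g * w)⁻¹ ∈ B) → x g = y g := by
    intro g hg hgB
    rw [hC] at hg
    push Not at hg
    obtain ⟨w, hw, hgw⟩ := hg
    have := key _ (hgB w hw) hgw _ (hinv w hw)
    simpa using this
  refine ⟨_, hglue x hx y hy fun g hg => key2 g hg.2 (hD g hg.1), ?_, ?_⟩
  · refine aux_supD_le hε.le fun b hb => hW _ _ fun w hw => ?_
    simp only [aux_smul]
    split_ifs with h
    · rfl
    · by_cases hbA : b ∈ A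
      · exact key2 _ h fun v hv => hA b hbA w hw v hv
      · exact key b hb hbA w hw
  · refine aux_supD_le hε.le fun b hb => hW _ _ fun w hw => ?_
    simp only [aux_smul]
    rw [if_neg]
    intro h
    rw [hC] at h
    exact hb.2 (by simpa using h _ (hinv w hw))

end helpers

/-- Combinatorial characterization of the (strong) TMP for `G`-subshifts:
`G ↷ X` has the TMP iff for every finite `A` there is a finite `B ⊇ A` such that whenever two
points of `X` agree on `B∖A`, the configuration equal to the first on `A` and to the second
elsewhere belongs to `X`; and `G ↷ X` has the strong TMP iff there is a finite `F ∋ 1` such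
that for every finite `A`, whenever two points of `X` agree on `AF∖A`, the glued
configuration belongs to `X`. -/
theorem stmt5 (G Λ : Type*) [Group G] [Countable G] [Infinite G] [DecidableEq G]
    [Fintype Λ] [Nonempty Λ]
    [MetricSpace (G → Λ)] [CompactSpace (G → Λ)]
    (hcompat : (inferInstance : TopologicalSpace (G → Λ)) =
      @Pi.topologicalSpace G (fun _ => Λ) (fun _ => ⊥))
    (X : Set (G → Λ)) (hXclosed : IsClosed X)
    (hXinv : ∀ g : G, ∀ x ∈ X, g • x ∈ X) :
    ((∀ ε > (0 : ℝ), ∃ δ > (0 : ℝ), ∀ A : Finset G, ∃ B : Finset G,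
        (A : Set G) ⊆ (B : Set G) ∧
        ∀ x ∈ X, ∀ y ∈ X, supD ((B : Set G) \ (A : Set G)) x y ≤ δ →
          ∃ z ∈ X, supD (B : Set G) x z ≤ ε ∧ supD (Set.univ \ (A : Set G)) y z ≤ ε) ↔
      (∀ A : Finset G, ∃ B : Finset G, (A : Set G) ⊆ (B : Set G) ∧
        ∀ x ∈ X, ∀ y ∈ X, (∀ g ∈ (B : Set G) \ (A : Set G), x g = y g) →
          (fun g => if g ∈ A then x g else y g) ∈ X)) ∧
    ((∀ ε > (0 : ℝ), ∃ δ > (0 : ℝ), ∃ F : Finset G, (1 : G) ∈ F ∧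
        ∀ A : Finset G,
        ∀ x ∈ X, ∀ y ∈ X,
          supD (((F * A : Finset G) : Set G) \ (A : Set G)) x y ≤ δ →
          ∃ z ∈ X, supD ((F * A : Finset G) : Set G) x z ≤ ε ∧
            supD (Set.univ \ (A : Set G)) y z ≤ ε) ↔
      (∃ F : Finset G, (1 : G) ∈ F ∧
        ∀ A : Finset G, ∀ x ∈ X, ∀ y ∈ X,
          (∀ g ∈ ((A * F : Finset G) : Set G) \ (A : Set G), x g = y g) →
          (fun g => if g ∈ A then x g else y g) ∈ X)) := by
  have hδ1 := aux_δ hcompat ({1} : Finset G)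
  obtain ⟨ε₀, hε₀, hε₀'⟩ := hδ1
  have hε₁ : ∀ x y : G → Λ, dist x y ≤ ε₀ → x 1 = y 1 := fun x y h => hε₀' x y h 1 (by simp)
  have hCex : ∀ (W A : Finset G), (1 : G) ∈ W →
      ∀ g, g ∈ (A⁻¹).filter (fun g => ∀ w ∈ W, (g * w)⁻¹ ∈ A) ↔ ∀ w ∈ W, (g * w)⁻¹ ∈ A := by
    intro W A h1 g
    rw [Finset.mem_filter, Finset.mem_inv']
    exact ⟨fun h => h.2, fun h => ⟨by simpa using h 1 h1, h⟩⟩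
  refine ⟨⟨fun H A => ?_, fun H ε hε => ?_⟩, ⟨fun H => ?_, fun ⟨F, hF1, H⟩ ε hε => ?_⟩⟩
  · obtain ⟨δ, hδ, H⟩ := H ε₀ hε₀
    obtain ⟨W, h1, hinv, hW⟩ := aux_W hcompat δ hδ
    obtain ⟨B', hB', hmem⟩ := H (A * W)⁻¹
    refine ⟨A ∪ B'⁻¹ * W, by simp, ?_⟩
    exact aux_fwd X ε₀ δ hδ hε₁ W h1 hinv hW A B' _ (Finset.coe_subset.1 hB')
      (fun b hb w hw => Finset.mem_union_right _
        (Finset.mul_mem_mul (Finset.inv_mem_inv hb) hw)) hmem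
  · obtain ⟨W, h1, hinv, hW⟩ := aux_W hcompat ε hε
    obtain ⟨δ, hδ, hδ'⟩ := aux_δ hcompat W
    refine ⟨δ, hδ, fun A => ?_⟩
    obtain ⟨D, -, hD⟩ := H ((A⁻¹).filter (fun g => ∀ w ∈ W, (g * w)⁻¹ ∈ A))
    refine ⟨A ∪ ((D * W)⁻¹ ∪ (A⁻¹ * W * W)⁻¹), by simp, ?_⟩
    refine aux_bwd X ε δ hε W h1 hinv hW hδ' A _ D _ (hCex W A h1) ?_ ?_ hD
    · intro d hd w hw
      exact Finset.mem_union_right _ (Finset.mem_union_left _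
        (Finset.inv_mem_inv (Finset.mul_mem_mul hd hw)))
    · intro a ha v hv w hw
      exact Finset.mem_union_right _ (Finset.mem_union_right _
        (Finset.inv_mem_inv (Finset.mul_mem_mul
          (Finset.mul_mem_mul (Finset.inv_mem_inv ha) hv) hw)))
  · obtain ⟨δ, hδ, F, hF1, H⟩ := H ε₀ hε₀
    obtain ⟨W, h1, hinv, hW⟩ := aux_W hcompat δ hδ
    refine ⟨W * F⁻¹ * W, ?_, fun A => ?_⟩
    · have := Finset.mul_mem_mul (Finset.mul_mem_mul h1 (Finset.inv_mem_inv hF1)) h1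
      simpa using this
    · refine aux_fwd X ε₀ δ hδ hε₁ W h1 hinv hW A (F * (A * W)⁻¹) _ ?_ ?_ (H _)
      · intro g hg
        simpa using Finset.mul_mem_mul hF1 hg
      · intro b hb w hw
        have := Finset.mul_mem_mul (Finset.inv_mem_inv hb) hw
        rw [mul_inv_rev, inv_inv] at this
        simpa only [mul_assoc] using this
  · obtain ⟨W, h1, hinv, hW⟩ := aux_W hcompat ε hε
    obtain ⟨δ, hδ, hδ'⟩ := aux_δ hcompat W
    refine ⟨δ, hδ, (W * W)⁻¹ ∪ (F * W)⁻¹, ?_, fun A => ?_⟩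
    · have := Finset.inv_mem_inv (Finset.mul_mem_mul h1 h1)
      exact Finset.mem_union_left _ (by simpa using this)
    · refine aux_bwd X ε δ hε W h1 hinv hW hδ' A _ _ _ (hCex W A h1) ?_ ?_
        (H ((A⁻¹).filter (fun g => ∀ w ∈ W, (g * w)⁻¹ ∈ A)))
      · intro d hd w hw
        obtain ⟨c, hc, f, hf, rfl⟩ := Finset.mem_mul.1 hd
        have hcA : c⁻¹ ∈ A := Finset.mem_inv'.1 (Finset.mem_filter.1 hc).1
        have := Finset.mul_mem_mul (Finset.mem_union_right (W * W)⁻¹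
          (Finset.inv_mem_inv (Finset.mul_mem_mul hf hw))) hcA
        simpa only [mul_inv_rev, mul_assoc] using this
      · intro a ha v hv w hw
        have := Finset.mul_mem_mul (Finset.mem_union_left (F * W)⁻¹
          (Finset.inv_mem_inv (Finset.mul_mem_mul hv hw))) ha
        simpa only [mul_inv_rev, mul_assoc, inv_inv] using this
end

section
/- Let G ↷ X be an action, F a finite subset of G with e_G ∈ F = F⁻¹, and δ > 0. Then there exists η > 0 such that for any finite A ⊆ G, any FA-separated V ⊆ G, any family (x_v)_{v∈V} in X, and any y ∈ X satisfying d_{(FA∖A)v}(x_v,y) ≤ η for all v ∈ V, the family (w_γ)_{γ∈G} defined by w_γ = γ x_v if γ ∈ Av for some v ∈ V and w_γ = γ y if γ ∈ G∖AV, is an (F,δ) pseudo-orbit. -/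
open Pointwise

/-- Let `G ↷ X` be an action, `F ⊆ G` finite with `e ∈ F = F⁻¹` and `δ > 0`.
Then there exists `η > 0` such that for any finite `A ⊆ G`, any `FA`-separated `V ⊆ G`, any
family `(x_v)_{v∈V}` and any `y` satisfying `d_{(FA∖A)v}(x_v,y) ≤ η` for all `v ∈ V`, the
family `(w_γ)` with `w_γ = γ x_v` for `γ ∈ Av` (`v ∈ V`) and `w_γ = γ y` for `γ ∉ AV` is an
`(F,δ)` pseudo-orbit. -/
theorem stmt6 (G X : Type*) [Group G] [Countable G] [Infinite G] [DecidableEq G]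
    [MetricSpace X] [CompactSpace X] [MulAction G X]
    (hcont : ∀ g : G, Continuous fun x : X => g • x)
    (F : Finset G) (hF1 : (1 : G) ∈ F) (hFinv : F⁻¹ = F) (δ : ℝ) (hδ : 0 < δ) :
    ∃ η > (0 : ℝ), ∀ A : Finset G, ∀ V : Set G,
      Separated ((F * A : Finset G) : Set G) V →
      ∀ (xv : G → X) (y : X),
        (∀ v ∈ V, supD ((((F * A : Finset G) : Set G) \ (A : Set G)) * ({v} : Set G))
            (xv v) y ≤ η) →
        ∀ w : G → X,
          (∀ v ∈ V, ∀ γ ∈ (A : Set G) * ({v} : Set G), w γ = γ • xv v) →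
          (∀ γ ∉ (A : Set G) * V, w γ = γ • y) →
          IsPseudoOrbit F δ w := by
  have huc : ∀ s : G, ∃ η > (0 : ℝ), ∀ a b : X, dist a b < η → dist (s • a) (s • b) < δ := by
    intro s
    have h := CompactSpace.uniformContinuous_of_continuous (hcont s)
    obtain ⟨η, h0, h1⟩ := Metric.uniformContinuous_iff.1 h δ hδ
    exact ⟨η, h0, fun a b hab => h1 hab⟩
  choose e he0 he using huc
  obtain ⟨m, hmF, hm⟩ := F.exists_min_image e ⟨1, hF1⟩
  have hlt : ∀ s ∈ F, e m / 2 < e s := fun s hs => by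
    have := hm s hs
    have := he0 m
    linarith
  refine ⟨e m / 2, half_pos (he0 m), ?_⟩
  intro A V hV xv y hd w hw1 hw2 s hs g
  have key : ∀ v ∈ V, ∀ a ∈ F * A, a ∉ A →
      dist ((a * v) • xv v) ((a * v) • y) ≤ e m / 2 := by
    intro v hv a ha haA
    have hfin : (((((F * A : Finset G) : Set G) \ (A : Set G)) * ({v} : Set G))).Finite :=
      ((F * A).finite_toSet.subset Set.sdiff_subset).mul (Set.finite_singleton v)
    haveI := hfin.to_subtype
    have hmem : a * v ∈ (((F * A : Finset G) : Set G) \ (A : Set G)) * ({v} : Set G) :=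
      Set.mul_mem_mul ⟨Finset.mem_coe.2 ha, fun h => haA (Finset.mem_coe.1 h)⟩ rfl
    refine le_trans ?_ (hd v hv)
    unfold supD supOf
    exact le_ciSup (f := fun k : ((((F * A : Finset G) : Set G) \ (A : Set G)) * ({v} : Set G) :
      Set G) => dist ((k : G) • xv v) ((k : G) • y)) (Set.finite_range _).bddAbove ⟨a * v, hmem⟩
  have hw1' : ∀ v ∈ V, ∀ a ∈ A, w (a * v) = (a * v) • xv v := fun v hv a ha =>
    hw1 v hv _ (Set.mul_mem_mul (Finset.mem_coe.2 ha) rfl)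
  have hsinv : s⁻¹ ∈ F := by
    rw [← hFinv]
    exact Finset.inv_mem_inv hs
  have hnot : ∀ γ, γ ∉ (A : Set G) * V → ∀ v ∈ V, ∀ a ∈ A, a * v ≠ γ := by
    rintro γ h v hv a ha rfl
    exact h (Set.mul_mem_mul (Finset.mem_coe.2 ha) hv)
  by_cases h1 : g ∈ (A : Set G) * V
  · obtain ⟨a, ha, v, hv, rfl⟩ := Set.mem_mul.1 h1
    have ha' : a ∈ A := Finset.mem_coe.1 ha
    rw [hw1' v hv a ha', smul_smul]
    by_cases h2 : s * (a * v) ∈ (A : Set G) * V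
    · obtain ⟨b, hb, u, hu, hbu⟩ := Set.mem_mul.1 h2
      have hb' : b ∈ A := Finset.mem_coe.1 hb
      have huv : u = v := by
        by_contra hne
        refine (Set.disjoint_left.1 (hV u hu v hv hne) : ∀ ⦃c : G⦄, _) (?_ : b * u ∈ _) ?_
        · refine Set.mul_mem_mul (Finset.mem_coe.2 ?_) rfl
          simpa using Finset.mul_mem_mul hF1 hb'
        · rw [hbu, ← mul_assoc]
          exact Set.mul_mem_mul (Finset.mem_coe.2 (Finset.mul_mem_mul hs ha')) rfl
      subst huv
      rw [← hbu, hw1' u hu b hb', dist_self]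
      exact hδ
    · rw [hw2 _ h2]
      have h3 := key v hv (s * a) (Finset.mul_mem_mul hs ha') (fun h => by
        exact hnot _ h2 v hv _ h (mul_assoc _ _ _))
      have h4 := he 1 (((s * a) * v) • xv v) (((s * a) * v) • y)
        (lt_of_le_of_lt h3 (hlt 1 hF1))
      simpa [mul_assoc] using h4
  · rw [hw2 _ h1]
    by_cases h2 : s * g ∈ (A : Set G) * V
    · obtain ⟨b, hb, u, hu, hbu⟩ := Set.mem_mul.1 h2
      have hb' : b ∈ A := Finset.mem_coe.1 hb
      have hg : s⁻¹ * b * u = g := by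
        rw [mul_assoc, hbu, inv_mul_cancel_left]
      have h3 := key u hu (s⁻¹ * b) (Finset.mul_mem_mul hsinv hb')
        (fun h => hnot _ h1 u hu _ h hg)
      rw [hg] at h3
      have h4 := he s _ _ (lt_of_le_of_lt h3 (hlt s hs))
      have hwsg : w (s * g) = (s * g) • xv u := by
        rw [← hbu]
        exact hw1' u hu b hb'
      rw [hwsg, mul_smul, dist_comm]
      exact h4
    · rw [hw2 _ h2, mul_smul, dist_self]
      exact hδ
end

section
/- Let G ↷ X be a minimal expansive action of a countably infinite group on a compact metrizable space. Then G ↷ X has the topological Markov property if and only if it has no off-diagonal asymptotic pairs. -/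
open Pointwise

section Helpers

lemma supD_le_iff' {G X : Type*} [SMul G X] [MetricSpace X] [CompactSpace X]
    (K : Set G) (x y : X) {e : ℝ} (he : 0 ≤ e) :
    supD K x y ≤ e ↔ ∀ g ∈ K, dist (g • x) (g • y) ≤ e := by
  unfold supD supOf
  constructor
  · intro h g hg
    refine le_trans ?_ h
    refine le_ciSup (f := fun g : K => dist ((g : G) • x) ((g : G) • y)) ?_ ⟨g, hg⟩
    refine ⟨Metric.diam (Set.univ : Set X), ?_⟩
    rintro _ ⟨k, rfl⟩
    exact Metric.dist_le_diam_of_mem isCompact_univ.isBounded trivial trivial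
  · intro h
    exact Real.iSup_le (fun g => h g.1 g.2) he

lemma compact_help {G X : Type*} [Group G] [MetricSpace X] [CompactSpace X] [MulAction G X]
    (hcont : ∀ g : G, Continuous fun x : X => g • x)
    (K : Set (X × X)) (hK : IsClosed K) (I : Set G) (r : ℝ)
    (h : ∀ p q : X, (∀ g ∈ I, dist (g • p) (g • q) ≤ r) → (p, q) ∉ K) :
    ∃ F : Finset G, (F : Set G) ⊆ I ∧
      ∀ p q : X, (∀ g ∈ F, dist (g • p) (g • q) ≤ r) → (p, q) ∉ K := by
  classical
  obtain ⟨u, hu⟩ := hK.isCompact.elim_finite_subfamily_closed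
    (fun g : I => {p : X × X | dist ((g : G) • p.1) ((g : G) • p.2) ≤ r})
    (fun g => isClosed_le
      (((hcont g).comp continuous_fst).dist ((hcont g).comp continuous_snd)) continuous_const)
    (by
      ext ⟨p, q⟩
      simp only [Set.mem_inter_iff, Set.mem_iInter, Set.mem_ofPred_eq, Set.mem_empty_iff_false,
        iff_false, not_and]
      intro hk hh
      exact h p q (fun g hg => hh ⟨g, hg⟩) hk)
  refine ⟨u.image Subtype.val, ?_, ?_⟩
  · intro g hg
    simp only [Finset.coe_image, Set.mem_image] at hg
    obtain ⟨a, _, rfl⟩ := hg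
    exact a.2
  · intro p q hpq hk
    have : (p, q) ∈ (∅ : Set (X × X)) := by
      rw [← hu]
      refine ⟨hk, ?_⟩
      simp only [Set.mem_iInter, Set.mem_ofPred_eq]
      intro g hg
      exact hpq g (Finset.mem_image_of_mem _ hg)
    exact this

/-- uniform expansivity -/
lemma unif_exp {G X : Type*} [Group G] [MetricSpace X] [CompactSpace X] [MulAction G X]
    (hcont : ∀ g : G, Continuous fun x : X => g • x) {c : ℝ}
    (hc : ∀ x y : X, x ≠ y → ∃ g : G, dist (g • x) (g • y) > c) {e : ℝ} (he : 0 < e) :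
    ∃ F : Finset G, ∀ p q : X, (∀ g ∈ F, dist (g • p) (g • q) ≤ c) → dist p q ≤ e := by
  obtain ⟨F, _, hF⟩ := compact_help hcont {p : X × X | e ≤ dist p.1 p.2}
    (isClosed_le continuous_const (continuous_fst.dist continuous_snd)) Set.univ c (by
      intro p q h hk
      have : p = q := by
        by_contra hne
        obtain ⟨g, hg⟩ := hc p q hne
        exact absurd (h g trivial) (not_le.mpr hg)
      subst this
      simp at hk
      linarith)
  refine ⟨F, fun p q h => ?_⟩
  have := hF p q h
  simp at this
  exact this.le

lemma easy_dir {G X : Type*} [Group G] [MetricSpace X] [CompactSpace X] [MulAction G X]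
    (hcont : ∀ g : G, Continuous fun x : X => g • x) (hexp : Expansive G X)
    (h : ∀ x y : X, Asymptotic G x y → x = y) : TMP G X := by
  classical
  obtain ⟨c, hc0, hc⟩ := hexp
  intro ε hε
  refine ⟨min ε c, lt_min hε hc0, fun A => ?_⟩
  obtain ⟨F, hFI, hF⟩ := compact_help hcont
    (⋃ a ∈ A, {p : X × X | ε ≤ dist (a • p.1) (a • p.2)})
    (isClosed_biUnion_finset fun a _ => isClosed_le continuous_const
      (((hcont a).comp continuous_fst).dist ((hcont a).comp continuous_snd)))
    ((A : Set G)ᶜ) (min ε c) (by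
      intro p q hpq hk
      have hpq' : p = q := by
        apply h
        intro e he
        obtain ⟨F, hF⟩ := unif_exp hcont hc he
        refine ⟨F⁻¹ * A, fun g hg => hF _ _ fun f hf => ?_⟩
        rw [← mul_smul, ← mul_smul]
        refine (hpq (f * g) ?_).trans (min_le_right _ _)
        intro hA
        apply hg
        have := Finset.mul_mem_mul (Finset.inv_mem_inv hf) hA
        simpa using this
      subst hpq'
      simp at hk
      linarith [hk.2])
  refine ⟨A ∪ F, ?_, ?_⟩
  · intro a ha
    simp at ha ⊢
    exact Or.inl ha
  · intro x y hxy
    rw [supD_le_iff' _ _ _ (le_min hε.le hc0.le)] at hxy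
    have h1 : ∀ g ∈ F, dist (g • x) (g • y) ≤ min ε c := by
      intro g hg
      refine hxy g ⟨?_, hFI hg⟩
      simp [hg]
    refine ⟨y, ?_, ?_⟩
    · rw [supD_le_iff' _ _ _ hε.le]
      intro g hg
      simp at hg
      rcases hg with hg | hg
      · have := hF x y h1
        simp at this
        exact (this g hg).le
      · exact (h1 g hg).trans (min_le_left _ _)
    · rw [supD_le_iff' _ _ _ hε.le]
      intro g _
      simpa using hε.le

lemma exists_sep {G : Type*} [Group G] [Infinite G] (M : Finset G) (n : ℕ) :
    ∃ T : Finset G, T.card = n ∧ ∀ t ∈ T, ∀ t' ∈ T, t ≠ t' →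
      ∀ a ∈ M, ∀ b ∈ M, a * t ≠ b * t' := by
  classical
  induction n with
  | zero => exact ⟨∅, by simp⟩
  | succ n ih =>
    obtain ⟨T, hT, hs⟩ := ih
    obtain ⟨t, ht⟩ := Infinite.exists_notMem_finset (T ∪ M⁻¹ * (M * T))
    simp only [Finset.mem_union, not_or] at ht
    have key : ∀ t' ∈ T, ∀ a ∈ M, ∀ b ∈ M, a * t ≠ b * t' := by
      intro t' ht' a ha b hb hab
      apply ht.2
      have := Finset.mul_mem_mul (Finset.inv_mem_inv ha) (Finset.mul_mem_mul hb ht')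
      rw [← hab] at this
      simpa using this
    refine ⟨insert t T, by rw [Finset.card_insert_of_notMem ht.1, hT], ?_⟩
    intro t₁ h₁ t₂ h₂ hne a ha b hb hab
    rw [Finset.mem_insert] at h₁ h₂
    rcases h₁ with rfl | h₁ <;> rcases h₂ with rfl | h₂
    · exact hne rfl
    · exact key _ h₂ a ha b hb hab
    · exact key _ h₁ b hb a ha hab.symm
    · exact hs _ h₁ _ h₂ hne a ha b hb hab

lemma exists_max_sep {G : Type*} [Group G] (M : Finset G) (hM : M.Nonempty) (W : Finset G) :
    ∃ V : Finset G, (∀ t ∈ V, ∀ t' ∈ V, t ≠ t' → ∀ a ∈ M, ∀ b ∈ M, a * t ≠ b * t') ∧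
      ∀ g ∈ W, ∃ v ∈ V, ∃ a ∈ M, ∃ b ∈ M, a * g = b * v := by
  classical
  induction W using Finset.induction_on with
  | empty => exact ⟨∅, by simp, by simp⟩
  | insert g W hg ih =>
    obtain ⟨V, hs, hW⟩ := ih
    by_cases hV : ∃ v ∈ V, ∃ a ∈ M, ∃ b ∈ M, a * g = b * v
    · refine ⟨V, hs, fun x hx => ?_⟩
      rw [Finset.mem_insert] at hx
      rcases hx with rfl | hx
      · exact hV
      · exact hW x hx
    · push Not at hV
      refine ⟨insert g V, ?_, ?_⟩
      · intro t₁ h₁ t₂ h₂ hne a ha b hb hab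
        rw [Finset.mem_insert] at h₁ h₂
        rcases h₁ with rfl | h₁ <;> rcases h₂ with rfl | h₂
        · exact hne rfl
        · exact hV _ h₂ a ha b hb hab
        · exact hV _ h₁ b hb a ha hab.symm
        · exact hs _ h₁ _ h₂ hne a ha b hb hab
      · intro x hx
        rw [Finset.mem_insert] at hx
        rcases hx with rfl | hx
        · obtain ⟨m, hm⟩ := hM
          exact ⟨x, Finset.mem_insert_self _ _, m, hm, m, hm, rfl⟩
        · obtain ⟨v, hv, r⟩ := hW x hx
          exact ⟨v, Finset.mem_insert_of_mem hv, r⟩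

/-- finite simultaneous swaps -/
lemma swap_lemma {G X : Type*} [Group G] [MetricSpace X] [CompactSpace X] [MulAction G X]
    {c κ δ : ℝ} (hκ : 0 < κ) (hκc : 10 * κ ≤ c) (hκδ : 2 * κ ≤ δ)
    (A B₀ B F : Finset G) (hmem : IsMemorySet G X (c / 4) δ A B₀) (hB₀ : B₀ ⊆ B)
    (h1F : (1 : G) ∈ F)
    (hF : ∀ p q : X, (∀ g ∈ F, dist (g • p) (g • q) ≤ c) → dist p q ≤ κ / 3)
    (hFB : ∀ f ∈ F, ∀ f' ∈ F, ∀ a ∈ A, f * (f'⁻¹ * a) ∈ B) (hAB : A ⊆ B)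
    (x y z₀ : X) (hxy : ∀ g ∉ A, dist (g • x) (g • y) ≤ κ / 3)
    (S : Finset G) (hO : ∀ s ∈ S, ∀ b ∈ B, dist (b • s • z₀) (b • x) ≤ κ / 3)
    (hsep : ∀ s ∈ S, ∀ s' ∈ S, s ≠ s' → ∀ a ∈ B, ∀ b ∈ B, a * s ≠ b * s') :
    ∃ z : X, (∀ g, (∀ s ∈ S, ∀ a ∈ A, g ≠ a * s) → dist (g • z) (g • z₀) ≤ κ) ∧
      ∀ s ∈ S, ∀ b ∈ B, dist (b • s • z) (b • y) ≤ κ := by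
  classical
  induction S using Finset.induction_on with
  | empty => exact ⟨z₀, by simp [hκ.le], by simp⟩
  | insert v S hv ih =>
    obtain ⟨z, hza, hzb⟩ := ih (fun s hs => hO s (Finset.mem_insert_of_mem hs))
      (fun s hs s' hs' => hsep s (Finset.mem_insert_of_mem hs) s' (Finset.mem_insert_of_mem hs'))
    have hvS : ∀ s ∈ S, ∀ a ∈ B, ∀ b ∈ B, a * v ≠ b * s := fun s hs =>
      hsep v (Finset.mem_insert_self _ _) s (Finset.mem_insert_of_mem hs)
        (fun h => hv (h ▸ hs))
    -- closeness on B \ A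
    have hclose : ∀ b ∈ B, b ∉ A → dist (b • y) (b • v • z) ≤ 2 * κ := by
      intro b hb hbA
      have e1 := hza (b * v) (fun s hs a ha => hvS s hs b hb a (hAB ha))
      have e2 := hO v (Finset.mem_insert_self _ _) b hb
      have e3 := hxy b hbA
      rw [mul_smul, mul_smul] at e1
      have := dist_triangle4 (b • y) (b • x) (b • v • z₀) (b • v • z)
      rw [dist_comm (b • y) (b • x), dist_comm (b • x) (b • v • z₀),
        dist_comm (b • v • z₀) (b • v • z)] at this
      linarith
    obtain ⟨w, hw1, hw2⟩ := hmem.2 y (v • z) (by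
      rw [supD_le_iff' _ _ _ (by linarith)]
      rintro b ⟨hb, hbA⟩
      exact (hclose b (hB₀ hb) hbA).trans hκδ)
    rw [supD_le_iff' _ _ _ (by linarith)] at hw1 hw2
    have hwB : ∀ b ∈ B, dist (b • y) (b • w) ≤ c / 4 + 2 * κ := by
      intro b hb
      by_cases hbA : b ∈ A
      · have := hw1 b (hmem.1 hbA)
        linarith
      · have e1 := hclose b hb hbA
        have e2 := hw2 b ⟨trivial, hbA⟩
        have := dist_triangle (b • y) (b • v • z) (b • w)
        linarith
    obtain ⟨z', rfl⟩ : ∃ z', w = v • z' := ⟨v⁻¹ • w, by simp⟩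
    have hz' : ∀ g, (∀ a ∈ A, g ≠ a * v) → dist (g • z) (g • z') ≤ c / 4 := by
      intro g hg
      have := hw2 (g * v⁻¹) ⟨trivial, fun h => hg _ h (by simp)⟩
      simpa [← mul_smul] using this
    -- rough bounds
    have ra : ∀ g, (∀ s ∈ insert v S, ∀ a ∈ A, g ≠ a * s) → dist (g • z') (g • z₀) ≤ c := by
      intro g hg
      have e1 := hz' g (hg v (Finset.mem_insert_self _ _))
      have e2 := hza g (fun s hs => hg s (Finset.mem_insert_of_mem hs))
      have := dist_triangle_left (g • z') (g • z₀) (g • z)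
      linarith
    have rb : ∀ s ∈ insert v S, ∀ b ∈ B, dist (b • s • z') (b • y) ≤ c := by
      intro s hs b hb
      rw [Finset.mem_insert] at hs
      rcases hs with rfl | hs
      · have := hwB b hb
        rw [dist_comm]
        linarith
      · have e1 := hz' (b * s) (fun a ha h => hvS s hs a (hAB ha) b hb h.symm)
        rw [mul_smul, mul_smul] at e1
        have e2 := hzb s hs b hb
        have := dist_triangle_left (b • s • z') (b • y) (b • s • z)
        linarith
    -- dichotomy
    have dich : ∀ g, ((∀ s ∈ insert v S, ∀ a ∈ A, g ≠ a * s) ∧ dist (g • z') (g • z₀) ≤ κ / 3) ∨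
        ∃ u ∈ insert v S, ∃ b ∈ B, g = b * u ∧ dist (b • u • z') (b • y) ≤ κ / 3 := by
      intro g
      by_cases hg : ∀ f ∈ F, ∀ s ∈ insert v S, ∀ a ∈ A, f * g ≠ a * s
      · left
        refine ⟨by simpa using hg 1 h1F, hF _ _ fun f hf => ?_⟩
        rw [← mul_smul, ← mul_smul]
        exact ra _ (hg f hf)
      · right
        push Not at hg
        obtain ⟨f, hf, s, hs, a, ha, hfa⟩ := hg
        have hgs : g = f⁻¹ * a * s := by
          rw [mul_assoc, ← hfa]; simp
        refine ⟨s, hs, f⁻¹ * a, by simpa using hFB 1 h1F f hf a ha, hgs, hF _ _ fun f' hf' => ?_⟩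
        rw [← mul_smul, ← mul_smul f']
        exact rb s hs _ (hFB f' hf' f hf a ha)
    refine ⟨z', ?_, ?_⟩
    · intro g hg
      rcases dich g with h | ⟨u, hu, b, hb, rfl, h⟩
      · linarith [h.2]
      · have hbA : b ∉ A := fun hbA => hg u hu b hbA rfl
        have e2 := hO u hu b hb
        have e3 := hxy b hbA
        rw [mul_smul, mul_smul]
        have := dist_triangle4 (b • u • z') (b • y) (b • x) (b • u • z₀)
        rw [dist_comm (b • y), dist_comm (b • x) (b • u • z₀)] at this
        linarith
    · intro s hs b hb
      rcases dich (b * s) with ⟨h1, h2⟩ | ⟨u, hu, b', hb', heq, h⟩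
      · have hbA : b ∉ A := fun hbA => h1 s hs b hbA rfl
        have e2 := hO s hs b hb
        have e3 := hxy b hbA
        rw [mul_smul, mul_smul] at h2
        have := dist_triangle4 (b • s • z') (b • s • z₀) (b • x) (b • y)
        linarith
      · by_cases hsu : s = u
        · subst hsu
          have : b = b' := mul_right_cancel heq
          subst this
          linarith
        · exact absurd heq (hsep s hs u hu hsu b hb b' hb')

lemma exists_large (C : ℕ) : ∃ n : ℕ, 0 < n ∧ (C * n) * (C * n) < 2 ^ n := by
  have h := tendsto_pow_const_div_const_pow_of_one_lt 2 (r := (2 : ℝ)) (by norm_num)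
  have h2 := (h.eventually (gt_mem_nhds (show (0 : ℝ) < 1 / ((C : ℝ) ^ 2 + 1) by positivity))).and
    (Filter.eventually_gt_atTop 0) |>.exists
  obtain ⟨n, hn, hn0⟩ := h2
  refine ⟨n, hn0, ?_⟩
  rw [div_lt_div_iff₀ (by positivity) (by positivity)] at hn
  have : ((C * n : ℝ)) * (C * n) < 2 ^ n := by nlinarith [sq_nonneg (n : ℝ)]
  exact_mod_cast this

lemma min_cover {G X : Type*} [Group G] [MetricSpace X] [CompactSpace X] [MulAction G X]
    (hcont : ∀ g : G, Continuous fun x : X => g • x)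
    (hmin : MinimalAction G X) (U : Set X) (hU : IsOpen U) (hne : U.Nonempty) :
    ∃ K : Finset G, ∀ p : X, ∃ k ∈ K, k • p ∈ U := by
  have hall : ∀ p : X, ∃ g : G, g • p ∈ U := by
    by_contra hcon
    push Not at hcon
    obtain ⟨p, hp⟩ := hcon
    have := hmin {q | ∀ g : G, g • q ∈ Uᶜ} (by
      simp only [Set.ofPred_forall]
      exact isClosed_iInter fun g => hU.isClosed_compl.preimage (hcont g)) (by
      intro g q hq h
      rw [← mul_smul]
      exact hq _) ⟨p, hp⟩
    obtain ⟨u, hu⟩ := hne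
    have h2 : u ∈ {q | ∀ g : G, g • q ∈ Uᶜ} := by rw [this]; trivial
    have := h2 1
    simp at this
    exact this hu
  obtain ⟨K, hK⟩ := isCompact_univ.elim_finite_subcover (fun g : G => (fun x : X => g • x) ⁻¹' U)
    (fun g => hU.preimage (hcont g)) (by
      intro p _
      simpa using hall p)
  refine ⟨K, fun p => ?_⟩
  have := hK (Set.mem_univ p)
  simpa using this

lemma open_ball {G X : Type*} [Group G] [MetricSpace X] [MulAction G X]
    (hcont : ∀ g : G, Continuous fun x : X => g • x) (B : Finset G) (x : X) (e : ℝ) :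
    IsOpen {p : X | ∀ b ∈ B, dist (b • p) (b • x) < e} := by
  have : {p : X | ∀ b ∈ B, dist (b • p) (b • x) < e} =
      ⋂ b ∈ B, {p : X | dist (b • p) (b • x) < e} := by
    ext; simp
  rw [this]
  exact isOpen_biInter_finset fun b _ =>
    isOpen_lt ((hcont b).dist continuous_const) continuous_const

lemma hard_dir {G X : Type*} [Group G] [Infinite G] [MetricSpace X] [CompactSpace X]
    [MulAction G X] (hcont : ∀ g : G, Continuous fun x : X => g • x)
    (hmin : MinimalAction G X) {c : ℝ} (hc0 : 0 < c)
    (hc : ∀ x y : X, x ≠ y → ∃ g : G, dist (g • x) (g • y) > c) (htmp : TMP G X)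
    (x y : X) (hxy : Asymptotic G x y) (hd : c < dist x y) : False := by
  classical
  obtain ⟨δ, hδ, hmem⟩ := htmp (c / 4) (by positivity)
  obtain ⟨κ, hκ, hκc, hκδ⟩ : ∃ κ > 0, 10 * κ ≤ c ∧ 2 * κ ≤ δ := by
    refine ⟨min (c / 10) (δ / 2), by positivity, ?_, ?_⟩
    · linarith [min_le_left (c / 10) (δ / 2)]
    · linarith [min_le_right (c / 10) (δ / 2)]
  obtain ⟨F₀, hF₀⟩ := unif_exp hcont hc (show 0 < κ / 3 by positivity)
  obtain ⟨F, h1F, hF⟩ : ∃ F : Finset G, 1 ∈ F ∧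
      ∀ p q : X, (∀ g ∈ F, dist (g • p) (g • q) ≤ c) → dist p q ≤ κ / 3 :=
    ⟨insert 1 F₀, Finset.mem_insert_self _ _, fun p q h =>
      hF₀ p q fun g hg => h g (Finset.mem_insert_of_mem hg)⟩
  obtain ⟨A, hA⟩ := hxy (κ / 3) (by positivity)
  have h1A : (1 : G) ∈ A := by
    by_contra h
    have := hA 1 h
    simp at this
    linarith
  obtain ⟨B₀, hB₀⟩ := hmem A
  obtain ⟨B, hB₀B, hFB⟩ : ∃ B : Finset G, B₀ ⊆ B ∧
      ∀ f ∈ F, ∀ f' ∈ F, ∀ a ∈ A, f * (f'⁻¹ * a) ∈ B :=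
    ⟨B₀ ∪ F * (F⁻¹ * A), Finset.subset_union_left, fun f hf f' hf' a ha =>
      Finset.mem_union_right _ (Finset.mul_mem_mul hf
        (Finset.mul_mem_mul (Finset.inv_mem_inv hf') ha))⟩
  have hAB : A ⊆ B := fun a ha => by simpa using hFB 1 h1F 1 h1F a ha
  have h1B : (1 : G) ∈ B := hAB h1A
  obtain ⟨K, hK⟩ := min_cover hcont hmin _ (open_ball hcont B x (κ / 3))
    ⟨x, by intro b _; simpa using hκ⟩
  obtain ⟨n, hn0, hn⟩ := exists_large (B * K).card
  obtain ⟨T', hT'card, hT'⟩ := exists_sep (B * K) n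
  set T : Finset G := (B * K) * T' with hT
  have hTcard : T.card ≤ (B * K).card * n := by
    rw [← hT'card]; exact Finset.card_mul_le
  have hnT : T.card * T.card < 2 ^ n := lt_of_le_of_lt (Nat.mul_le_mul hTcard hTcard) hn
  -- the pattern to be avoided
  set B' : Finset G := K * T' * (T⁻¹ * T) with hB'
  set U' : Set X := {p : X | ∀ b ∈ B', dist (b • p) (b • x) < κ} with hU'
  have hU'o : IsOpen U' := open_ball hcont B' x κ
  have hxU' : x ∈ U' := by intro b _; simpa using hκ
  obtain ⟨W, hW⟩ := min_cover hcont hmin U' hU'o ⟨x, hxU'⟩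
  choose k hkK hkU using hK
  -- separated centers
  have hTne : T.Nonempty := by
    have : T'.Nonempty := Finset.card_pos.mp (by omega)
    exact (Finset.Nonempty.mul ⟨1, h1B⟩ ⟨k x, hkK x⟩).mul this
  obtain ⟨V, hVsep, hVW⟩ := exists_max_sep T hTne W
  let site : G → G → G := fun v t => k (t • v • x) * (t * v)
  -- choice of colours
  have hcol : ∀ v : G, ∃ C : Finset G, C ⊆ T' ∧ ∀ h ∈ T⁻¹ * T,
      C ≠ T'.filter (fun t => dist ((k (t • v • x) * t * h) • x) y < c / 2) := by
    intro v
    have hlt : ((T⁻¹ * T).image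
        (fun h => T'.filter (fun t => dist ((k (t • v • x) * t * h) • x) y < c / 2))).card
        < T'.powerset.card := by
      rw [Finset.card_powerset, hT'card]
      refine lt_of_le_of_lt Finset.card_image_le (lt_of_le_of_lt ?_ hnT)
      refine Finset.card_mul_le.trans ?_
      rw [Finset.card_inv]
    obtain ⟨C, hC, hC2⟩ := Finset.exists_mem_notMem_of_card_lt_card hlt
    refine ⟨C, Finset.mem_powerset.mp hC, fun h hh heq => hC2 ?_⟩
    rw [heq]
    exact Finset.mem_image_of_mem _ hh
  choose C hCT hC using hcol
  have site_mem : ∀ v, ∀ t ∈ T', ∀ b ∈ B, ∃ q ∈ B * K, q * t ∈ T ∧ b * site v t = q * t * v := by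
    intro v t ht b hb
    have hq := Finset.mul_mem_mul hb (hkK (t • v • x))
    exact ⟨_, hq, Finset.mul_mem_mul hq ht, by simp [site, mul_assoc]⟩
  have site_sep : ∀ v ∈ V, ∀ v' ∈ V, ∀ t ∈ T', ∀ t' ∈ T', (v, t) ≠ (v', t') →
      ∀ a ∈ B, ∀ b ∈ B, a * site v t ≠ b * site v' t' := by
    intro v hv v' hv' t ht t' ht' hne a ha b hb heq
    obtain ⟨q, hq, hqT, e1⟩ := site_mem v t ht a ha
    obtain ⟨q', hq', hqT', e2⟩ := site_mem v' t' ht' b hb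
    rw [e1, e2] at heq
    by_cases hvv : v = v'
    · subst hvv
      have htt : t ≠ t' := fun h => hne (by rw [h])
      exact hT' t ht t' ht' htt q hq q' hq' (mul_right_cancel heq)
    · exact hVsep v hv v' hv' hvv _ hqT _ hqT' heq
  let P : Finset (G × G) := (V ×ˢ T').filter (fun p => p.2 ∈ C p.1)
  let S : Finset G := P.image (fun p => site p.1 p.2)
  have hS : ∀ s ∈ S, ∃ v ∈ V, ∃ t ∈ T', t ∈ C v ∧ s = site v t := by
    intro s hs
    obtain ⟨p, hp, rfl⟩ := Finset.mem_image.mp hs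
    simp only [P, Finset.mem_filter, Finset.mem_product] at hp
    exact ⟨p.1, hp.1.1, p.2, hp.1.2, hp.2, rfl⟩
  have site_occ : ∀ v t, ∀ b ∈ B, dist (b • site v t • x) (b • x) ≤ κ / 3 := by
    intro v t b hb
    have := hkU (t • v • x) b hb
    simp only [site, mul_smul]
    exact this.le
  obtain ⟨z, hza, hzb⟩ := swap_lemma hκ hκc hκδ A B₀ B F hB₀ hB₀B h1F hF hFB hAB x y x hA S
    (by
      intro s hs
      obtain ⟨v, _, t, _, _, rfl⟩ := hS s hs
      exact site_occ v t)
    (by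
      intro s hs s' hs' hne
      obtain ⟨v, hv, t, ht, _, rfl⟩ := hS s hs
      obtain ⟨v', hv', t', ht', _, rfl⟩ := hS s' hs'
      exact site_sep v hv v' hv' t ht t' ht' (fun h => hne (by
        rw [Prod.mk.injEq] at h; rw [h.1, h.2])))
  obtain ⟨g, hgW, hgU⟩ := hW z
  obtain ⟨v, hv, a, ha, b, hb, hab⟩ := hVW g hgW
  have hh : b⁻¹ * a ∈ T⁻¹ * T := Finset.mul_mem_mul (Finset.inv_mem_inv hb) ha
  have hvg : v = b⁻¹ * a * g := by rw [mul_assoc, hab]; simp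
  apply hC v _ hh
  ext t
  rw [Finset.mem_filter]
  have hnear : ∀ t ∈ T', dist (site v t • z) ((k (t • v • x) * t * (b⁻¹ * a)) • x) < κ := by
    intro t ht
    have := hgU (k (t • v • x) * t * (b⁻¹ * a))
      (Finset.mul_mem_mul (Finset.mul_mem_mul (hkK _) ht) hh)
    rw [← mul_smul] at this
    have e : site v t = k (t • v • x) * t * (b⁻¹ * a) * g := by
      conv_rhs => rw [mul_assoc _ _ g, ← hvg]
      simp [site, mul_assoc]
    rw [e]
    exact this
  constructor
  · intro ht
    have htT := hCT v ht
    refine ⟨htT, ?_⟩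
    have e1 := hnear t htT
    have e2 := hzb (site v t) (Finset.mem_image.mpr ⟨(v, t), by simp [P, hv, htT, ht], rfl⟩) 1 h1B
    simp only [one_smul] at e2
    have := dist_triangle_left ((k (t • v • x) * t * (b⁻¹ * a)) • x) y (site v t • z)
    linarith
  · rintro ⟨htT, hlt⟩
    by_contra ht
    have e1 := hnear t htT
    have e2 := hza (site v t) (by
      intro s hs a' ha' heq
      obtain ⟨v', hv', t', ht', htC, rfl⟩ := hS s hs
      refine site_sep v hv v' hv' t htT t' ht' ?_ 1 h1B a' (hAB ha') (by simpa using heq)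
      intro h
      rw [Prod.mk.injEq] at h
      rw [h.1, h.2] at ht
      exact ht htC)
    have e3 := site_occ v t 1 h1B
    simp only [one_smul] at e3
    have t1 := dist_triangle4 x (site v t • x) (site v t • z)
      ((k (t • v • x) * t * (b⁻¹ * a)) • x)
    have t2 := dist_triangle x ((k (t • v • x) * t * (b⁻¹ * a)) • x) y
    rw [dist_comm x (site v t • x), dist_comm (site v t • x) (site v t • z)] at t1
    linarith

end Helpers

/-- A minimal expansive action of a countably infinite group on a compact
metrizable space has the topological Markov property iff it has no off-diagonal asymptotic
pairs. -/
theorem stmt7 (G X : Type*) [Group G] [Countable G] [Infinite G]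
    [MetricSpace X] [CompactSpace X] [MulAction G X]
    (hcont : ∀ g : G, Continuous fun x : X => g • x)
    (hmin : MinimalAction G X) (hexp : Expansive G X) :
    TMP G X ↔ ∀ x y : X, Asymptotic G x y → x = y := by
  constructor
  · intro htmp x y hxy
    by_contra hne
    obtain ⟨c, hc0, hc⟩ := hexp
    obtain ⟨g, hg⟩ := hc x y hne
    refine hard_dir hcont hmin hc0 hc htmp (g • x) (g • y) ?_ hg
    intro e he
    classical
    obtain ⟨F, hF⟩ := hxy e he
    refine ⟨F * {g⁻¹}, fun h hh => ?_⟩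
    rw [← mul_smul, ← mul_smul]
    refine hF _ fun hm => hh ?_
    have := Finset.mul_mem_mul hm (Finset.mem_singleton_self g⁻¹)
    simpa using this
  · exact easy_dir hcont hexp
end

section
/- If an action G ↷ X of a countably infinite group on a compact metrizable space is expansive and has no off-diagonal asymptotic pairs, then G ↷ X has the topological Markov property. -/
open Pointwise

/-- Compactness: a closed set of pairs separated by elements of `P` is separated by finitely many. -/
theorem finite_separation {G X : Type*} [Group G] [MetricSpace X] [CompactSpace X] [MulAction G X]
    (hcont : ∀ g : G, Continuous fun x : X => g • x) (δ : ℝ) (P : Set G) (K : Set (X × X))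
    (hK : IsClosed K) (h : ∀ p ∈ K, ∃ g ∈ P, δ < dist (g • p.1) (g • p.2)) :
    ∃ F : Finset G, (∀ g ∈ F, g ∈ P) ∧ ∀ p ∈ K, ∃ g ∈ F, δ < dist (g • p.1) (g • p.2) := by
  classical
  have hd : ∀ g : G, Continuous fun p : X × X => dist (g • p.1) (g • p.2) := fun g =>
    ((hcont g).comp continuous_fst).dist ((hcont g).comp continuous_snd)
  obtain ⟨t, ht⟩ := hK.isCompact.elim_finite_subcover
    (fun g : P => {p : X × X | δ < dist ((g : G) • p.1) ((g : G) • p.2)})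
    (fun g => isOpen_lt continuous_const (hd g))
    (fun p hp => by
      obtain ⟨g, hg, hlt⟩ := h p hp
      exact Set.mem_iUnion.2 ⟨⟨g, hg⟩, hlt⟩)
  refine ⟨t.image Subtype.val, ?_, ?_⟩
  · intro g hg
    obtain ⟨a, _, rfl⟩ := Finset.mem_image.1 hg
    exact a.2
  · intro p hp
    obtain ⟨g, hg, hlt⟩ := Set.mem_iUnion₂.1 (ht hp)
    exact ⟨g, Finset.mem_image_of_mem _ hg, hlt⟩

/-- If an action of a countably infinite group on a compact metrizable space
is expansive and has no off-diagonal asymptotic pairs, then it has the topological Markov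
property. -/
theorem stmt8 (G X : Type*) [Group G] [Countable G] [Infinite G]
    [MetricSpace X] [CompactSpace X] [MulAction G X]
    (hcont : ∀ g : G, Continuous fun x : X => g • x)
    (hexp : Expansive G X)
    (hnoasym : ∀ x y : X, Asymptotic G x y → x = y) :
    TMP G X := by
  classical
  obtain ⟨c, hc, hexp⟩ := hexp
  have key : ∀ (A : Finset G) (x y : X), (∀ g ∉ A, dist (g • x) (g • y) ≤ c) → x = y := by
    intro A x y hxy
    apply hnoasym
    intro ε hε
    obtain ⟨F, -, hF⟩ := finite_separation hcont c Set.univ {p : X × X | ε ≤ dist p.1 p.2}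
      (isClosed_le continuous_const (continuous_fst.dist continuous_snd))
      (by
        intro p hp
        have hne : p.1 ≠ p.2 := by
          intro he
          have : ε ≤ dist p.1 p.2 := hp
          rw [he, dist_self] at this
          linarith
        obtain ⟨g, hg⟩ := hexp _ _ hne
        exact ⟨g, trivial, hg⟩)
    refine ⟨F⁻¹ * A, fun g hg => ?_⟩
    by_contra hlt
    push Not at hlt
    obtain ⟨f, hf, hfc⟩ := hF (g • x, g • y) hlt.le
    have hfA : f * g ∉ A := by
      intro hm
      apply hg
      have := Finset.mul_mem_mul (Finset.inv_mem_inv hf) hm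
      simpa using this
    have := hxy _ hfA
    simp only [mul_smul] at this
    simp only at hfc
    linarith
  intro ε hε
  refine ⟨min c ε, lt_min hc hε, fun A => ?_⟩
  have hd : ∀ g : G, Continuous fun p : X × X => dist (g • p.1) (g • p.2) := fun g =>
    ((hcont g).comp continuous_fst).dist ((hcont g).comp continuous_snd)
  have hKc : IsClosed (⋃ a ∈ A, {p : X × X | ε ≤ dist (a • p.1) (a • p.2)}) :=
    A.finite_toSet.isClosed_biUnion fun a _ => isClosed_le continuous_const (hd a)
  obtain ⟨F, hFA, hF⟩ := finite_separation hcont (min c ε) {g | g ∉ A} _ hKc (by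
    intro p hp
    obtain ⟨a, ha, hlt⟩ := Set.mem_iUnion₂.1 hp
    by_contra hno
    push Not at hno
    have he := key A p.1 p.2 fun g hg => (hno g hg).trans (min_le_left _ _)
    have hlt' : ε ≤ dist (a • p.1) (a • p.2) := hlt
    rw [he, dist_self] at hlt'
    linarith)
  refine ⟨A ∪ F, by simp, fun x y hxy => ⟨y, ?_, ?_⟩⟩
  · have hle : ∀ g ∈ F, dist (g • x) (g • y) ≤ min c ε := by
      intro g hg
      refine le_trans ?_ hxy
      have hbdd : BddAbove (Set.range fun k : (((A ∪ F : Finset G) : Set G) \ (A : Set G) : Set G) =>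
          dist ((k : G) • x) ((k : G) • y)) :=
        ⟨Metric.diam (Set.univ : Set X), by
          rintro _ ⟨k, rfl⟩
          exact Metric.dist_le_diam_of_mem isCompact_univ.isBounded trivial trivial⟩
      exact le_ciSup hbdd ⟨g, by simp [hg], hFA g hg⟩
    refine Real.iSup_le ?_ hε.le
    rintro ⟨g, hg⟩
    rcases Finset.mem_union.1 (Finset.mem_coe.1 hg) with hA | hgF
    · by_contra hlt
      push Not at hlt
      obtain ⟨f, hf, hfc⟩ := hF (x, y) (Set.mem_iUnion₂.2 ⟨g, hA, hlt.le⟩)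
      exact absurd (hle f hf) (not_le.2 hfc)
    · exact (hle g hgF).trans (min_le_right _ _)
  · refine Real.iSup_le ?_ hε.le
    intro g
    simpa using hε.le
end

section
/- Assume an action G ↷ X of a countably infinite group on a compact metrizable space has only finitely many minimal closed G-invariant subsets and has the uniform topological Markov property. Then X has no off-diagonal asymptotic pair (x₁,x₂) such that the orbit closure of x₁ is minimal. -/
open Pointwise

/-- `Y` is a minimal closed `G`-invariant subset of `X`. -/
def IsMinimalSub (G X : Type*) [SMul G X] [TopologicalSpace X] (Y : Set X) : Prop :=
  Y.Nonempty ∧ IsClosed Y ∧ (∀ g : G, ∀ y ∈ Y, g • y ∈ Y) ∧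
    ∀ Z ⊆ Y, Z.Nonempty → IsClosed Z → (∀ g : G, ∀ z ∈ Z, g • z ∈ Z) → Z = Y

theorem sep_iff {G : Type*} [Group G] (B V : Set G) :
    Separated B V ↔ ∀ v₁ ∈ V, ∀ v₂ ∈ V, ∀ b₁ ∈ B, ∀ b₂ ∈ B, b₁ * v₁ = b₂ * v₂ → v₁ = v₂ := by
  constructor
  · intro h v₁ h1 v₂ h2 b₁ hb1 b₂ hb2 he
    by_contra hne
    refine Set.disjoint_left.1 (h v₁ h1 v₂ h2 hne) (Set.mul_mem_mul hb1 rfl) ?_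
    rw [he]
    exact Set.mul_mem_mul hb2 rfl
  · intro h v₁ h1 v₂ h2 hne
    rw [Set.disjoint_left]
    rintro a ⟨b₁, hb1, c, hc, rfl⟩ ⟨b₂, hb2, c', hc', he⟩
    rw [Set.mem_singleton_iff] at hc hc'
    subst hc; subst hc'
    exact hne (h _ h1 _ h2 b₁ hb1 b₂ hb2 he.symm)

theorem exists_maxsep {G : Type*} [Group G] (B R : Set G) (hB : B.Nonempty) :
    ∃ V ⊆ R, Separated B V ∧ ∀ r ∈ R, ∃ v ∈ V, ∃ b ∈ B, ∃ b' ∈ B, b * r = b' * v := by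
  obtain ⟨V, hV⟩ := zorn_subset {V : Set G | V ⊆ R ∧ Separated B V} (by
    intro c hc hchain
    refine ⟨⋃₀ c, ⟨Set.sUnion_subset fun s hs => (hc hs).1, ?_⟩,
      fun s hs => Set.subset_sUnion_of_mem hs⟩
    rintro v₁ ⟨s, hs, h1⟩ v₂ ⟨t, ht, h2⟩ hne
    rcases hchain.total hs ht with h | h
    · exact (hc ht).2 v₁ (h h1) v₂ h2 hne
    · exact (hc hs).2 v₁ h1 v₂ (h h2) hne)
  refine ⟨V, hV.prop.1, hV.prop.2, fun r hr => ?_⟩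
  by_contra hcon
  push Not at hcon
  have hsep : Separated B (insert r V) := by
    have h0 := (sep_iff B V).1 hV.prop.2
    rw [sep_iff]
    rintro v₁ (rfl | h1) v₂ (rfl | h2) b₁ hb1 b₂ hb2 he
    · rfl
    · exact absurd he (hcon v₂ h2 b₁ hb1 b₂ hb2)
    · exact absurd he.symm (hcon v₁ h1 b₂ hb2 b₁ hb1)
    · exact h0 v₁ h1 v₂ h2 b₁ hb1 b₂ hb2 he
  have hle := hV.le_of_ge (y := insert r V)
    ⟨Set.insert_subset hr hV.prop.1, hsep⟩ (Set.subset_insert _ _)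
  obtain ⟨b, hb⟩ := hB
  exact hcon r (hle (Set.mem_insert _ _)) b hb b hb rfl

theorem le_of_supD {G X : Type*} [SMul G X] [MetricSpace X] [CompactSpace X] {K : Set G} {x y : X}
    {c : ℝ} (h : supD K x y ≤ c) {g : G} (hg : g ∈ K) : dist (g • x) (g • y) ≤ c := by
  refine le_trans ?_ h
  unfold supD supOf
  refine le_ciSup (f := fun g : K => dist ((g : G) • x) ((g : G) • y)) ?_ (⟨g, hg⟩ : K)
  refine ⟨Metric.diam (Set.univ : Set X), ?_⟩
  rintro _ ⟨a, rfl⟩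
  exact Metric.dist_le_diam_of_mem isCompact_univ.isBounded (Set.mem_univ _) (Set.mem_univ _)

theorem supD_le {G X : Type*} [SMul G X] [MetricSpace X] {K : Set G} {x y : X}
    {c : ℝ} (hc : 0 ≤ c) (h : ∀ g ∈ K, dist (g • x) (g • y) ≤ c) : supD K x y ≤ c :=
  Real.iSup_le (fun g => h g g.2) hc

theorem exists_minimalSub {G X : Type*} [Group G] [MetricSpace X] [CompactSpace X] [MulAction G X]
    (Y : Set X) (hY : Y.Nonempty) (hc : IsClosed Y) (hi : ∀ g : G, ∀ y ∈ Y, g • y ∈ Y) :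
    ∃ M ⊆ Y, IsMinimalSub G X M := by
  obtain ⟨M, hMY, hM⟩ := zorn_superset_nonempty
    {Z : Set X | Z.Nonempty ∧ IsClosed Z ∧ ∀ g : G, ∀ y ∈ Z, g • y ∈ Z} (by
    intro c hcS hchain hne
    refine ⟨⋂₀ c, ⟨?_, isClosed_sInter fun s hs => (hcS hs).2.1, ?_⟩,
      fun s hs => Set.sInter_subset_of_mem hs⟩
    · have : Nonempty c := hne.to_subtype
      exact IsCompact.nonempty_sInter_of_directed_nonempty_isCompact_isClosed
        (fun a ha b hb => (hchain.total ha hb).elim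
          (fun h => ⟨a, ha, Set.Subset.refl a, h⟩) (fun h => ⟨b, hb, h, Set.Subset.refl b⟩))
        (fun s hs => (hcS hs).1)
        (fun s hs => (hcS hs).2.1.isCompact) (fun s hs => (hcS hs).2.1)
    · intro g y hy s hs
      exact (hcS hs).2.2 g y (hy s hs)) Y ⟨hY, hc, hi⟩
  refine ⟨M, hMY, hM.prop.1, hM.prop.2.1, hM.prop.2.2, fun Z hZ h1 h2 h3 => ?_⟩
  exact Set.Subset.antisymm hZ (hM.le_of_le (y := Z) ⟨h1, h2, h3⟩ hZ)

theorem closure_orbit_inv {G X : Type*} [Group G] [MetricSpace X] [MulAction G X]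
    (hcont : ∀ g : G, Continuous fun x : X => g • x) (z : X) :
    ∀ g : G, ∀ y ∈ closure (MulAction.orbit G z), g • y ∈ closure (MulAction.orbit G z) := by
  intro g y hy
  refine map_mem_closure (hcont g) hy ?_
  rintro _ ⟨a, rfl⟩
  exact ⟨g * a, by simp [mul_smul]⟩

/-- Return times of a point with minimal orbit closure are syndetic. -/
theorem syndetic_return {G X : Type*} [Group G] [MetricSpace X] [CompactSpace X] [MulAction G X]
    (hcont : ∀ g : G, Continuous fun x : X => g • x) (x : X)
    (hmin : IsMinimalSub G X (closure (MulAction.orbit G x))) (U : Set X) (hU : IsOpen U)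
    (hx : x ∈ U) : ∃ K : Finset G, ∀ g : G, ∃ k ∈ K, (k * g) • x ∈ U := by
  have hcov : closure (MulAction.orbit G x) ⊆ ⋃ k : G, (fun y : X => k • y) ⁻¹' U := by
    intro y hy
    have h1 : closure (MulAction.orbit G y) = closure (MulAction.orbit G x) := by
      refine hmin.2.2.2 _ ?_ ⟨y, subset_closure (MulAction.mem_orbit_self y)⟩ isClosed_closure
        (closure_orbit_inv hcont y)
      refine closure_minimal ?_ isClosed_closure
      rintro _ ⟨a, rfl⟩
      exact closure_orbit_inv hcont x a y hy
    have h2 : x ∈ closure (MulAction.orbit G y) := by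
      rw [h1]; exact subset_closure (MulAction.mem_orbit_self x)
    obtain ⟨_, hw, ⟨a, rfl⟩⟩ := mem_closure_iff.1 h2 U hU hx
    exact Set.mem_iUnion.2 ⟨a, hw⟩
  obtain ⟨K, hK⟩ := (isClosed_closure.isCompact).elim_finite_subcover _
    (fun k => hU.preimage (hcont k)) hcov
  refine ⟨K, fun g => ?_⟩
  have := hK (subset_closure (MulAction.mem_orbit x g))
  simp only [Set.mem_iUnion, Set.mem_preimage] at this
  obtain ⟨k, hk, h⟩ := this
  exact ⟨k, hk, by rwa [mul_smul]⟩

theorem growth (k c : ℕ) : ∃ m : ℕ, 0 < m ∧ k * (m * c) ^ 2 < 2 ^ m := by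
  have h := tendsto_pow_const_div_const_pow_of_one_lt 2 (r := (2 : ℝ)) (by norm_num)
  have h2 := h.const_mul ((k : ℝ) * c ^ 2)
  rw [mul_zero] at h2
  obtain ⟨m, hm, hm0⟩ := ((h2.eventually (gt_mem_nhds one_pos)).and
    (Filter.eventually_gt_atTop 0)).exists
  refine ⟨m, hm0, ?_⟩
  have h3 : (0 : ℝ) < 2 ^ m := by positivity
  rw [← mul_div_assoc, div_lt_one h3] at hm
  have : ((k * (m * c) ^ 2 : ℕ) : ℝ) < ((2 ^ m : ℕ) : ℝ) := by
    push_cast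
    calc (k : ℝ) * (m * c) ^ 2 = k * c ^ 2 * m ^ 2 := by ring
      _ < 2 ^ m := hm
  exact_mod_cast this

open Classical in
/-- Combinatorial core: if `V` is syndetic, some `S ⊆ V` differs from finitely many prescribed
patterns at every place. -/
theorem exists_pattern_avoiding {G ι : Type*} [Group G] [Infinite G] (I : Finset ι)
    (V : Set G) (K : Finset G) (hK : ∀ g : G, ∃ k ∈ K, k * g ∈ V)
    (P : ι → G → Prop) :
    ∃ (S : Set G) (W : Finset G), ∀ u : G, ∀ i ∈ I, ∃ v ∈ V, v * u⁻¹ ∈ W ∧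
      ¬ (v ∈ S ↔ P i (v * u⁻¹)) := by
  obtain ⟨m, hm0, hm⟩ := growth I.card K.card
  have hKne : (K : Set G).Nonempty := by
    obtain ⟨k, hk, -⟩ := hK 1
    exact ⟨k, hk⟩
  -- many disjoint translates of K
  obtain ⟨N, -, hNsep, hNmax⟩ := exists_maxsep (K : Set G) Set.univ hKne
  have hNinf : N.Infinite := by
    intro hfin
    have : (Set.univ : Set G) ⊆ ((K : Set G)⁻¹ * ((K : Set G) * N)) := by
      intro r _
      obtain ⟨v, hv, b, hb, b', hb', he⟩ := hNmax r trivial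
      refine ⟨b⁻¹, by simpa using hb, b' * v, Set.mul_mem_mul hb' hv, ?_⟩
      simp [← he]
    exact Set.infinite_univ (((K.finite_toSet.inv).mul (K.finite_toSet.mul hfin)).subset this)
  obtain ⟨t, htN, htc⟩ := hNinf.exists_subset_card_eq m
  have hNsep' := (sep_iff _ _).1 hNsep
  set F : Finset G := K * t with hF
  have hFc : F.card ≤ m * K.card := by
    rw [mul_comm, ← htc]; exact Finset.card_mul_le
  have htne : t.Nonempty := by
    rw [← Finset.card_pos]; omega
  have hFne : (F : Set G).Nonempty := by
    exact_mod_cast Finset.Nonempty.mul (by exact_mod_cast hKne) htne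
  obtain ⟨H, -, hHsep, hHmax⟩ := exists_maxsep (F : Set G) Set.univ hFne
  have hHsep' := (sep_iff _ _).1 hHsep
  let D : G → Finset G := fun h => (F.image (fun f => f * h)).filter (fun g => g ∈ V)
  have hD : ∀ h, m ≤ (D h).card := by
    intro h
    choose κ hκK hκV using fun j : G => hK (j * h)
    have : (t.image (fun j => κ j * (j * h))).card = m := by
      rw [← htc]
      refine Finset.card_image_of_injOn ?_
      intro j hj j' hj' he
      refine hNsep' j (htN hj) j' (htN hj') (κ j) (hκK j) (κ j') (hκK j') ?_
      simpa [← mul_assoc] using he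
    rw [← this]
    refine Finset.card_le_card ?_
    intro g hg
    obtain ⟨j, hj, rfl⟩ := Finset.mem_image.1 hg
    refine Finset.mem_filter.2 ⟨Finset.mem_image.2 ⟨κ j * j, Finset.mul_mem_mul (hκK j) hj, ?_⟩,
      hκV j⟩
    simp [mul_assoc]
  -- bad patterns
  let T : G → (G × G) × ι → Finset G := fun h p =>
    (D h).filter (fun v => P p.2 (v * (p.1.1⁻¹ * p.1.2 * h)⁻¹))
  have hS : ∀ h : G, ∃ s ∈ (D h).powerset, s ∉ ((F ×ˢ F) ×ˢ I).image (T h) := by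
    intro h
    refine Finset.exists_mem_notMem_of_card_lt_card ?_
    calc (((F ×ˢ F) ×ˢ I).image (T h)).card ≤ ((F ×ˢ F) ×ˢ I).card := Finset.card_image_le
      _ = I.card * F.card ^ 2 := by rw [Finset.card_product, Finset.card_product]; ring
      _ ≤ I.card * (m * K.card) ^ 2 := by gcongr
      _ < 2 ^ m := hm
      _ ≤ 2 ^ (D h).card := Nat.pow_le_pow_right (by norm_num) (hD h)
      _ = _ := (Finset.card_powerset _).symm
  choose s hsD hsT using hS
  refine ⟨⋃ h ∈ H, (s h : Set G), F * (F⁻¹ * F), fun u i hi => ?_⟩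
  obtain ⟨h, hh, b, hb, b', hb', he⟩ := hHmax u trivial
  have hu : u = b⁻¹ * b' * h := by
    rw [mul_assoc, ← he]; simp
  have hne : s h ≠ T h ((b, b'), i) := by
    intro heq
    refine hsT h (Finset.mem_image.2 ⟨((b, b'), i), ?_, heq.symm⟩)
    simp only [Finset.mem_product]
    exact ⟨⟨hb, hb'⟩, hi⟩
  have hex : ∃ v ∈ D h, ¬ (v ∈ s h ↔ v ∈ T h ((b, b'), i)) := by
    by_contra hcon
    push Not at hcon
    refine hne (Finset.ext fun v => ?_)
    by_cases hv : v ∈ D h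
    · exact hcon v hv
    · refine iff_of_false (fun h' => hv (Finset.mem_powerset.1 (hsD h) h')) (fun h' => hv ?_)
      exact (Finset.mem_filter.1 h').1
  obtain ⟨v, hvD, hv⟩ := hex
  have hDF : ∀ h' v', v' ∈ D h' → ∃ f ∈ F, f * h' = v' := fun h' v' hv' =>
    Finset.mem_image.1 (Finset.mem_filter.1 hv').1
  refine ⟨v, (Finset.mem_filter.1 hvD).2, ?_, ?_⟩
  · obtain ⟨f, hf, rfl⟩ := hDF h v hvD
    refine Finset.mem_mul.2 ⟨f, hf, b'⁻¹ * b, Finset.mul_mem_mul (Finset.inv_mem_inv hb') hb, ?_⟩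
    rw [hu]; group
  · have h1 : v ∈ (⋃ h ∈ H, (s h : Set G)) ↔ v ∈ s h := by
      simp only [Set.mem_iUnion, Finset.mem_coe]
      constructor
      · rintro ⟨h', hh', hv'⟩
        obtain ⟨f, hf, hfe⟩ := hDF h v hvD
        obtain ⟨f', hf', hfe'⟩ := hDF h' v (Finset.mem_powerset.1 (hsD h') hv')
        have : h = h' := hHsep' h hh h' hh' f hf f' hf' (hfe.trans hfe'.symm)
        rwa [this]
      · intro h'; exact ⟨h, hh, h'⟩
    have h2 : v ∈ T h ((b, b'), i) ↔ P i (v * u⁻¹) := by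
      rw [hu]
      exact ⟨fun h' => (Finset.mem_filter.1 h').2, fun h' => Finset.mem_filter.2 ⟨hvD, h'⟩⟩
    rw [h1, ← h2]
    exact hv

open Classical in
/-- Points with freely prescribed behaviour on a syndetic set. -/
theorem exists_free_set {G X : Type*} [Group G]
    [MetricSpace X] [CompactSpace X] [MulAction G X]
    (hcont : ∀ g : G, Continuous fun x : X => g • x)
    (hutmp : UniformTMP G X) (x₁ x₂ : X) (has : Asymptotic G x₁ x₂)
    (hmin : IsMinimalSub G X (closure (MulAction.orbit G x₁))) (ε : ℝ) (hε : 0 < ε) :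
    ∃ (V : Set G) (K : Finset G), (∀ g : G, ∃ k ∈ K, k * g ∈ V) ∧
      ∀ S : Set G, ∃ z : X, ∀ v ∈ V, dist (v • z) (if v ∈ S then x₂ else x₁) ≤ ε := by
  obtain ⟨δ, hδ, hmem⟩ := hutmp ε hε
  obtain ⟨A₀, hA₀⟩ := has (δ / 2) (by positivity)
  obtain ⟨B, ⟨hAB, -⟩, hB⟩ := hmem (insert 1 A₀)
  set A := insert 1 A₀ with hA
  have h1B : (1 : G) ∈ B := hAB (by simp [hA])
  let U : Set X := ⋂ b ∈ B, {x : X | dist (b • x) (b • x₁) < δ / 2}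
  have hUo : IsOpen U := by
    refine isOpen_biInter_finset fun b _ => ?_
    exact isOpen_lt ((hcont b).dist continuous_const) continuous_const
  have hUx : x₁ ∈ U := by
    simp only [U, Set.mem_iInter, Set.mem_setOf_eq, dist_self]
    intro _ _; positivity
  obtain ⟨K₀, hK₀⟩ := syndetic_return hcont x₁ hmin U hUo hUx
  obtain ⟨V, hVR, hVsep, hVmax⟩ := exists_maxsep (B : Set G) {g : G | g • x₁ ∈ U} ⟨1, h1B⟩
  refine ⟨V, B⁻¹ * (B * K₀), fun g => ?_, fun S => ?_⟩
  · obtain ⟨k, hk, hkg⟩ := hK₀ g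
    obtain ⟨v, hv, b, hb, b', hb', he⟩ := hVmax (k * g) hkg
    refine ⟨b'⁻¹ * (b * k), Finset.mul_mem_mul (Finset.inv_mem_inv hb') (Finset.mul_mem_mul hb hk),
      ?_⟩
    have : b'⁻¹ * (b * k) * g = v := by
      rw [mul_assoc, mul_assoc, he]; simp
    rwa [this]
  · let C : V → Set X := fun v => {z | dist ((v : G) • z) (if (v : G) ∈ S then x₂ else x₁) ≤ ε}
    have hCc : ∀ v, IsClosed (C v) := fun v =>
      isClosed_le ((hcont v).dist continuous_const) continuous_const
    have hne : (Set.univ ∩ ⋂ v, C v).Nonempty := by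
      refine isCompact_univ.inter_iInter_nonempty C hCc fun s => ?_
      let V' : Finset G := s.image Subtype.val
      have hV'V : ∀ v ∈ V', v ∈ V := by
        intro v hv
        obtain ⟨w, -, rfl⟩ := Finset.mem_image.1 hv
        exact w.2
      obtain ⟨z, hz, -⟩ := hB V' (fun a ha b hb => hVsep a (hV'V a ha) b (hV'V b hb))
        (fun v => v⁻¹ • (if v ∈ S then x₂ else x₁)) x₁ (by
          intro v hv
          refine supD_le hδ.le ?_
          rintro _ ⟨b, ⟨hbB, hbA⟩, w, hw, rfl⟩
          rw [Set.mem_singleton_iff] at hw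
          subst hw
          have hR := hVR (hV'V _ hv)
          simp only [U, Set.mem_iInter, Set.mem_setOf_eq] at hR
          have hR := hR b hbB
          simp only [mul_smul, smul_inv_smul]
          have h2 : dist (b • x₁) (b • x₂) ≤ δ / 2 := by
            refine hA₀ b fun hb => hbA ?_
            simp [hA, hb]
          split_ifs
          · have := dist_triangle (b • x₂) (b • x₁) (b • w • x₁)
            rw [dist_comm (b • x₂) (b • x₁), dist_comm (b • x₁) (b • w • x₁)] at this
            linarith
          · rw [dist_comm]; linarith)
      refine ⟨z, trivial, ?_⟩
      simp only [Set.mem_iInter]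
      intro v hv
      have := le_of_supD (hz v (Finset.mem_image_of_mem _ hv)) (g := (v : G))
        ⟨1, h1B, v, rfl, one_mul _⟩
      simpa [C] using this
    obtain ⟨z, -, hz⟩ := hne
    refine ⟨z, fun v hv => ?_⟩
    exact Set.mem_iInter.1 hz ⟨v, hv⟩

/-- If an action has only finitely many minimal closed invariant subsets and
has the uniform TMP, then there is no off-diagonal asymptotic pair `(x₁,x₂)` with the orbit
closure of `x₁` minimal. -/
theorem stmt9 (G X : Type*) [Group G] [Countable G] [Infinite G]
    [MetricSpace X] [CompactSpace X] [MulAction G X]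
    (hcont : ∀ g : G, Continuous fun x : X => g • x)
    (hfin : {Y : Set X | IsMinimalSub G X Y}.Finite)
    (hutmp : UniformTMP G X) :
    ∀ x₁ x₂ : X, Asymptotic G x₁ x₂ →
      IsMinimalSub G X (closure (MulAction.orbit G x₁)) → x₁ = x₂ := by
  classical
  intro x₁ x₂ has hmin
  by_contra hne
  have hd : 0 < dist x₁ x₂ := dist_pos.2 hne
  obtain ⟨V, K, hK, hfree⟩ := exists_free_set hcont hutmp x₁ x₂ has hmin (dist x₁ x₂ / 8)
    (by positivity)
  have hq : ∀ Y : Set X, ∃ q : X, IsMinimalSub G X Y → q ∈ Y := by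
    intro Y
    by_cases h : IsMinimalSub G X Y
    · exact ⟨h.1.some, fun _ => h.1.some_mem⟩
    · exact ⟨x₁, fun h' => absurd h' h⟩
  choose q hq using hq
  obtain ⟨S, W, hSW⟩ := exists_pattern_avoiding hfin.toFinset V K hK
    (fun Y g => dist (g • q Y) x₂ < dist x₁ x₂ / 2)
  obtain ⟨z, hz⟩ := hfree S
  obtain ⟨M, hMz, hM⟩ := exists_minimalSub (G := G) (closure (MulAction.orbit G z))
    ⟨z, subset_closure (MulAction.mem_orbit_self z)⟩ isClosed_closure (closure_orbit_inv hcont z)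
  have hqz := hMz (hq M hM)
  let U : Set X := ⋂ w ∈ W, {x : X | dist (w • x) (w • q M) < dist x₁ x₂ / 8}
  have hUo : IsOpen U := by
    refine isOpen_biInter_finset fun b _ => ?_
    exact isOpen_lt ((hcont b).dist continuous_const) continuous_const
  have hUx : q M ∈ U := by
    simp only [U, Set.mem_iInter, Set.mem_setOf_eq, dist_self]
    intro _ _; positivity
  obtain ⟨_, hw, ⟨u, rfl⟩⟩ := mem_closure_iff.1 hqz U hUo hUx
  obtain ⟨v, hv, hvW, hcon⟩ := hSW u M (by simpa using hM)
  simp only [U, Set.mem_iInter, Set.mem_setOf_eq] at hw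
  have h1 := hw _ hvW
  rw [smul_smul, inv_mul_cancel_right] at h1
  have h2 := hz v hv
  refine hcon ?_
  by_cases hvS : v ∈ S
  · simp only [hvS, if_true] at h2
    refine iff_of_true hvS ?_
    have := dist_triangle_left ((v * u⁻¹) • q M) x₂ (v • z)
    linarith
  · simp only [hvS, if_false] at h2
    refine iff_of_false hvS ?_
    rw [not_lt]
    have h3 := dist_triangle_left ((v * u⁻¹) • q M) x₁ (v • z)
    have h4 := dist_triangle_left x₁ x₂ ((v * u⁻¹) • q M)
    linarith
end
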